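/- Let {S_i}_{i=1}^l be the affine IFS S_i(x) = A x + c_i on ℝ^d where A is compressed orthogonal (A A^T = c·I for some 0 < c < 1), let K be its attractor and π : Σ → K the canonical projection. Then the Hausdorff dimension of K equals sup { h_π(σ,m) : m ∈ M_σ(Σ) } / (−log ‖A‖). -/

import Mathlib

/-!
Write `L = -log ‖A‖` and `ρ = ‖A‖`, so that `A` is a similarity of ratio `ρ`. The proof compares the
Hausdorff dimension and the supremum of projection entropies with every threshold `s > 0`, and shows
that `s` is either a lower bound for both `dimH K` and `sup h_π / L`, or an upper bound for both. In
dimension `0` both sides of the formula vanish, so assume positive dimension.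

**Projection entropy as a growth rate.** Let `μ` be an invariant measure and `H_k` the entropy of
the partition of the symbolic space according to the dyadic cube of side `2 ^ (-k)` containing
`π x`. The chain rule, together with
`π x = A ^ n (π (σ^n x)) + (translation depending on the first n letters)`, gives
`n h_π(σ, μ) = H(w_n | π ∘ σ^n) - H(w_n | π)` for the word `w_n` of the first `n` letters
(`power_rule`). By Lévy's upward theorem both conditional entropies are limits along dyadic
partitions. Comparing `H(w_n, cube of π x)` with `H(w_n, cube of π (σ^n x))` at scales differing by
the factor `ρ ^ n` then yields `H_{k+t} - H_k = n h_π(σ, μ) + O(1)` for large `k`, where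
`2 ^ t ≈ ρ ^ (-n)` and the error does not depend on `n` (`eventually_abs_le`). Hence `H_k` grows
like `k log 2 · h_π(σ, μ) / L`.

**The dichotomy.** The pieces of level `n` are the sets `S_w K` with `w` a word of length `n`; all
of them have size comparable to `ρ ^ n`. Suppose some level `n` has at least `ρ ^ (-n s)` pairwise
disjoint pieces. Free concatenation of the corresponding words, with equal weights, gives a measure
invariant under `σ^n`. Disjoint compact pieces are separated, so the projection of this measure
satisfies the Frostman condition `μ(π⁻¹ B) ≤ C (diam B) ^ s`, and so does that of its average over
`n` shifts (`exists_frostman`). The mass distribution principle gives `dimH K ≥ s`, and the Frostman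
condition bounds `H_k` from below by `s k log 2 - O(1)`, whence `h_π ≥ s L`. If instead every
disjoint family of pieces of every level `n` has fewer than `ρ ^ (-n s)` members, a maximal one
shows that `K` is covered by fewer than `ρ ^ (-n s)` balls of radius comparable to `ρ ^ n`
(`exists_cover`). Then `dimH K ≤ s`, and `H_k ≤ s k log 2 + O(1)` for every invariant measure,
whence `h_π ≤ s L`.
-/

/- Projection pressure for affine IFS (Wang–Chen).
   Statement 8: dimension formula via projection entropy (Lemma 3.1). -/

open MeasureTheory Filter Set

noncomputable section

/-- The symbolic space `Σ = {1,…,l}^ℕ`. -/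
abbrev Sig (l : ℕ) := ℕ → Fin l

/-- The left shift `σ` on `Σ`. -/
def shift {l : ℕ} (x : Sig l) : Sig l := fun n => x (n + 1)

/-- First-coordinate cylinder partition `P = {[j] : 1 ≤ j ≤ l}`. -/
def cylP {l : ℕ} : Fin l → Set (Sig l) := fun j => {x | x 0 = j}

/-- Conditional entropy `H_μ(ξ | 𝒜) = ∫ I_μ(ξ|𝒜) dμ` of a finite partition `ξ`
    given a sub-σ-algebra `𝒜`, where
    `I_μ(ξ|𝒜) = -∑_{A ∈ ξ} 1_A · log E_μ(1_A | 𝒜)`. -/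
def condEntropyPart {α : Type*} [MeasurableSpace α] {ι : Type*} [Fintype ι]
    (μ : Measure α) (part : ι → Set α) (m : MeasurableSpace α) : ℝ :=
  ∑ i : ι, ∫ x in part i,
    -Real.log ((μ[(part i).indicator (fun _ => (1 : ℝ)) | m]) x) ∂μ

/-- Projection entropy `h_π(σ,μ) = H_μ(P | σ⁻¹π⁻¹γ) − H_μ(P | π⁻¹γ)`. -/
def projEntropy {l : ℕ} {E : Type*} [mE : MeasurableSpace E]
    (π : Sig l → E) (μ : Measure (Sig l)) : ℝ :=
  condEntropyPart μ cylP (MeasurableSpace.comap (fun x => π (shift x)) mE)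
    - condEntropyPart μ cylP (MeasurableSpace.comap π mE)

/-- `itIm S K x n = S_{x 0} ∘ ⋯ ∘ S_{x (n-1)} (K)`. -/
def itIm {l : ℕ} {E : Type*} (S : Fin l → E → E) (K : Set E) : Sig l → ℕ → Set E
  | _, 0 => K
  | x, n + 1 => S (x 0) '' itIm S K (shift x) n

/-! ### Conditional entropy of a finite-valued map -/

/-- The conditional probability `μ(ξ = i | m)` of a value of a finite-valued function `ξ`. -/
def condProbVal {Ω ι : Type*} {mΩ : MeasurableSpace Ω} (μ : Measure Ω) (ξ : Ω → ι)
    (m : MeasurableSpace Ω) (i : ι) : Ω → ℝ :=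
  μ[(ξ ⁻¹' {i}).indicator (fun _ => (1 : ℝ)) | m]

/-- The conditional entropy `H(ξ | m)` of a finite-valued function `ξ`, as the integral of
`∑ᵢ φ(μ(ξ = i | m))` with `φ(p) = -p log p`.  The integrand is bounded, unlike the information
function used in `condEntropyPart`. -/
def cEnt {Ω ι : Type*} [Fintype ι] {mΩ : MeasurableSpace Ω} (μ : Measure Ω) (ξ : Ω → ι)
    (m : MeasurableSpace Ω) : ℝ :=
  ∑ i, ∫ x, Real.negMulLog (condProbVal μ ξ m i x) ∂μ

section Entropy

variable {Ω ι κ : Type*} {m mΩ : MeasurableSpace Ω} {μ : Measure Ω} [IsProbabilityMeasure μ]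

/-- Pull-out property for a nonnegative `m`-measurable function that need not be integrable. -/
lemma setIntegral_eq_integral_condExp_mul (hm : m ≤ mΩ) {B : Set Ω} (hB : MeasurableSet B)
    {g : Ω → ℝ} (hg : StronglyMeasurable[m] g) (hg0 : ∀ᵐ x ∂μ, 0 ≤ g x) :
    ∫ x in B, g x ∂μ = ∫ x, (μ[B.indicator (fun _ => (1 : ℝ)) | m]) x * g x ∂μ := by
  set p := μ[B.indicator (fun _ => (1 : ℝ)) | m] with hp
  have hpm : StronglyMeasurable[m] p := stronglyMeasurable_condExp
  have hp0 : ∀ᵐ x ∂μ, 0 ≤ p x := condExp_nonneg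
    (Eventually.of_forall fun x => Set.indicator_nonneg (fun _ _ => zero_le_one) x)
  have hint : Integrable (B.indicator (fun _ => (1 : ℝ))) μ := (integrable_const 1).indicator hB
  -- on `m`, the restriction of `μ` to `B` has density `p`
  have key : (μ.restrict B).trim hm = (μ.trim hm).withDensity (fun x => ENNReal.ofReal (p x)) := by
    refine @Measure.ext _ m _ _ fun s hs => ?_
    rw [trim_measurableSet_eq hm hs, withDensity_apply _ hs, restrict_trim hm _ hs,
      lintegral_trim hm hpm.measurable.ennreal_ofReal,
      ← ofReal_integral_eq_lintegral_ofReal integrable_condExp.integrableOn (ae_restrict_of_ae hp0),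
      setIntegral_condExp hm hint hs, setIntegral_indicator hB, setIntegral_const,
      Measure.restrict_apply (hm s hs)]
    simp
  rw [integral_eq_lintegral_of_nonneg_ae (ae_restrict_of_ae hg0)
      (hg.mono hm).aestronglyMeasurable.restrict,
    integral_eq_lintegral_of_nonneg_ae (by filter_upwards [hp0, hg0] with x h1 h2 using mul_nonneg h1 h2)
      (f := fun x => p x * g x)
      ((hpm.mono hm).mul (hg.mono hm)).aestronglyMeasurable]
  congr 1
  rw [← lintegral_trim hm hg.measurable.ennreal_ofReal, key,
    lintegral_withDensity_eq_lintegral_mul _ hpm.measurable.ennreal_ofReal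
      hg.measurable.ennreal_ofReal,
    lintegral_trim hm (hpm.measurable.ennreal_ofReal.mul hg.measurable.ennreal_ofReal)]
  refine lintegral_congr_ae ?_
  filter_upwards [hp0] with x hx
  simp [ENNReal.ofReal_mul hx]

omit [IsProbabilityMeasure μ] in
lemma condProbVal_nonneg (ξ : Ω → ι) (i : ι) : ∀ᵐ x ∂μ, 0 ≤ condProbVal μ ξ m i x :=
  condExp_nonneg (Eventually.of_forall fun x => Set.indicator_nonneg (fun _ _ => zero_le_one) x)

lemma integrable_indVal {ξ : Ω → ι} {i : ι} (hξ : MeasurableSet (ξ ⁻¹' {i})) :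
    Integrable ((ξ ⁻¹' {i}).indicator (fun _ => (1 : ℝ))) μ :=
  (integrable_const 1).indicator hξ

lemma condProbVal_le_one (hm : m ≤ mΩ) {ξ : Ω → ι} {i : ι} (hξ : MeasurableSet (ξ ⁻¹' {i})) :
    ∀ᵐ x ∂μ, condProbVal μ ξ m i x ≤ 1 := by
  have h := condExp_mono (m := m) (integrable_indVal (μ := μ) hξ) (integrable_const (1 : ℝ))
    (Eventually.of_forall fun x => Set.indicator_le_self' (fun _ _ => zero_le_one) x)
  rw [condExp_const hm] at h
  exact h

omit [IsProbabilityMeasure μ] in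
lemma stronglyMeasurable_condProbVal (ξ : Ω → ι) (i : ι) :
    StronglyMeasurable[m] (condProbVal μ ξ m i) := stronglyMeasurable_condExp

lemma setIntegral_condProbVal (hm : m ≤ mΩ) {ξ : Ω → ι} {i : ι} (hξ : MeasurableSet (ξ ⁻¹' {i}))
    {s : Set Ω} (hs : MeasurableSet[m] s) :
    ∫ x in s, condProbVal μ ξ m i x ∂μ = μ.real (s ∩ ξ ⁻¹' {i}) := by
  rw [condProbVal, setIntegral_condExp hm (integrable_indVal hξ) hs, setIntegral_indicator hξ,
    setIntegral_const]
  simp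

lemma negMulLog_le_one {x : ℝ} (hx : 0 ≤ x) : Real.negMulLog x ≤ 1 := by
  have := Real.negMulLog_le_one_sub_self hx
  linarith

lemma integrable_negMulLog (hm : m ≤ mΩ) {p : Ω → ℝ} (hp : StronglyMeasurable[m] p)
    (h0 : ∀ᵐ x ∂μ, 0 ≤ p x) (h1 : ∀ᵐ x ∂μ, p x ≤ 1) :
    Integrable (fun x => Real.negMulLog (p x)) μ := by
  refine Integrable.of_bound
    (Real.continuous_negMulLog.comp_stronglyMeasurable (hp.mono hm)).aestronglyMeasurable 1 ?_
  filter_upwards [h0, h1] with x h0 h1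
  rw [Real.norm_of_nonneg (Real.negMulLog_nonneg h0 h1)]
  exact negMulLog_le_one h0

lemma integrable_negMulLog_condProbVal (hm : m ≤ mΩ) {ξ : Ω → ι} {i : ι}
    (hξ : MeasurableSet (ξ ⁻¹' {i})) :
    Integrable (fun x => Real.negMulLog (condProbVal μ ξ m i x)) μ :=
  integrable_negMulLog hm (stronglyMeasurable_condProbVal ξ i) (condProbVal_nonneg ξ i)
    (condProbVal_le_one hm hξ)

/-- Conditioning the information function `-log μ(ξ = i | m)` on `m` turns its integral over `{ξ = i}`
into the integral of `φ(μ(ξ = i | m))`. -/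
lemma condEntropyPart_eq_cEnt [Fintype ι] (hm : m ≤ mΩ) {ξ : Ω → ι}
    (hξ : ∀ i, MeasurableSet (ξ ⁻¹' {i})) :
    condEntropyPart μ (fun i => ξ ⁻¹' {i}) m = cEnt μ ξ m := by
  refine Finset.sum_congr rfl fun i _ => ?_
  have hg : StronglyMeasurable[m] fun x => -Real.log (condProbVal μ ξ m i x) :=
    (Real.measurable_log.comp
      (stronglyMeasurable_condProbVal ξ i).measurable).neg.stronglyMeasurable
  have := setIntegral_eq_integral_condExp_mul (μ := μ) hm (hξ i) hg (by
    filter_upwards [condProbVal_nonneg (m := m) (μ := μ) ξ i, condProbVal_le_one hm (hξ i)]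
      with x h0 h1
    have := Real.log_nonpos h0 h1
    linarith)
  refine this.trans (integral_congr_ae (Eventually.of_forall fun x => ?_))
  simp [Real.negMulLog, condProbVal]

lemma cEnt_nonneg [Fintype ι] (hm : m ≤ mΩ) {ξ : Ω → ι} (hξ : ∀ i, MeasurableSet (ξ ⁻¹' {i})) :
    0 ≤ cEnt μ ξ m := by
  refine Finset.sum_nonneg fun i _ => integral_nonneg_of_ae ?_
  filter_upwards [condProbVal_nonneg (m := m) (μ := μ) ξ i, condProbVal_le_one hm (hξ i)]
    with x h0 h1 using Real.negMulLog_nonneg h0 h1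

lemma sum_condProbVal [Fintype ι] (hm : m ≤ mΩ) {ξ : Ω → ι}
    (hξ : ∀ i, MeasurableSet (ξ ⁻¹' {i})) :
    ∀ᵐ x ∂μ, ∑ i, condProbVal μ ξ m i x = 1 := by
  have h := condExp_finsetSum (μ := μ) (s := Finset.univ)
    (f := fun i => (ξ ⁻¹' {i}).indicator (fun _ => (1 : ℝ)))
    (fun i _ => integrable_indVal (hξ i)) m
  have e : (∑ i, (ξ ⁻¹' {i}).indicator (fun _ => (1 : ℝ))) = fun _ => (1 : ℝ) := by
    classical
    funext x
    simp [Finset.sum_apply, Set.indicator_apply]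
  rw [e, condExp_const hm] at h
  filter_upwards [h] with x hx
  rw [Finset.sum_apply] at hx
  exact hx.symm

/-- Gibbs' inequality. -/
lemma sum_negMulLog_le_log_card {s : Finset ι} {p : ι → ℝ} (h0 : ∀ i, 0 ≤ p i)
    (h1 : ∑ i ∈ s, p i = 1) : ∑ i ∈ s, Real.negMulLog (p i) ≤ Real.log s.card := by
  have hs : (0 : ℝ) < s.card := by
    rcases s.eq_empty_or_nonempty with rfl | h
    · simp at h1
    · exact_mod_cast h.card_pos
  have key : ∀ i ∈ s, Real.negMulLog (p i) ≤ p i * Real.log s.card + (1 / s.card - p i) := by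
    intro i _
    rcases (h0 i).eq_or_lt with h | h
    · rw [← h]; simp
    · have := Real.log_le_sub_one_of_pos (x := 1 / (s.card * p i)) (by positivity)
      rw [Real.log_div one_ne_zero (by positivity), Real.log_one,
        Real.log_mul hs.ne' h.ne'] at this
      have h2 := mul_le_mul_of_nonneg_left this h.le
      have h3 : p i * (1 / (s.card * p i) - 1) = 1 / s.card - p i := by field_simp
      rw [h3] at h2
      simp only [Real.negMulLog]
      nlinarith
  calc _ ≤ ∑ i ∈ s, (p i * Real.log s.card + (1 / s.card - p i)) := Finset.sum_le_sum key
    _ = Real.log s.card := by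
      rw [Finset.sum_add_distrib, ← Finset.sum_mul, h1, Finset.sum_sub_distrib, h1,
        Finset.sum_const, nsmul_eq_mul, mul_one_div_cancel hs.ne']
      ring

omit [IsProbabilityMeasure μ] in
lemma condProbVal_eq_zero {ξ : Ω → ι} {i : ι} (h : ∀ x, ξ x ≠ i) : condProbVal μ ξ m i = 0 := by
  have : ξ ⁻¹' {i} = ∅ := by ext x; simp [h x]
  rw [condProbVal, this, Set.indicator_empty]
  exact condExp_zero (E := ℝ)

/-- If `ξ` takes its values in `s`, then `H(ξ | m) ≤ log |s|`. -/
lemma cEnt_le_log_card [Fintype ι] (hm : m ≤ mΩ) {ξ : Ω → ι}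
    (hξ : ∀ i, MeasurableSet (ξ ⁻¹' {i})) (s : Finset ι) (hs : ∀ x, ξ x ∈ s) :
    cEnt μ ξ m ≤ Real.log s.card := by
  have h0 : ∀ i, i ∉ s → condProbVal μ ξ m i = 0 := fun i hi =>
    condProbVal_eq_zero fun x hx => hi (hx ▸ hs x)
  rw [cEnt, ← integral_finsetSum _ fun i _ => integrable_negMulLog_condProbVal hm (hξ i)]
  calc _ ≤ ∫ x, Real.log s.card ∂μ := by
        refine integral_mono_ae
          (integrable_finsetSum _ fun i _ => integrable_negMulLog_condProbVal hm (hξ i))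
          (integrable_const _) ?_
        filter_upwards [sum_condProbVal (μ := μ) hm hξ,
          ae_all_iff.2 fun i => condProbVal_nonneg (m := m) (μ := μ) ξ i] with x h1 h2
        rw [← Finset.sum_subset s.subset_univ (fun i _ hi => by simp [h0 i hi])] at h1 ⊢
        exact sum_negMulLog_le_log_card h2 h1
    _ = _ := by simp

lemma cEnt_bot [Fintype ι] {ξ : Ω → ι} (hξ : ∀ i, MeasurableSet (ξ ⁻¹' {i})) :
    cEnt μ ξ ⊥ = ∑ i, Real.negMulLog (μ.real (ξ ⁻¹' {i})) := by
  refine Finset.sum_congr rfl fun i _ => ?_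
  rw [condProbVal, condExp_bot]
  simp [integral_indicator (hξ i)]

end Entropy

/-! ### The chain rule -/

section Entropy

variable {Ω ι κ : Type*} {m mΩ : MeasurableSpace Ω} {μ : Measure Ω} [IsProbabilityMeasure μ]

/-- On each fibre of `ξ`, a set of the σ-algebra generated by `m` and `ξ` agrees with a set
of `m`. -/
lemma exists_of_measurableSet_sup_comap (ξ : Ω → ι) {s : Set Ω}
    (hs : MeasurableSet[m ⊔ MeasurableSpace.comap ξ ⊤] s) (i : ι) :
    ∃ A, MeasurableSet[m] A ∧ s ∩ ξ ⁻¹' {i} = A ∩ ξ ⁻¹' {i} := by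
  rw [MeasurableSpace.measurableSet_sup] at hs
  induction hs with
  | basic u hu =>
    rcases hu with hu | ⟨t, -, rfl⟩
    · exact ⟨u, hu, rfl⟩
    · by_cases h : i ∈ t
      · refine ⟨univ, @MeasurableSet.univ _ m, ?_⟩
        ext x
        simp only [mem_inter_iff, mem_preimage, mem_singleton_iff, mem_univ, true_and]
        exact ⟨fun hx => hx.2, fun hx => ⟨hx ▸ h, hx⟩⟩
      · refine ⟨∅, @MeasurableSet.empty _ m, ?_⟩
        ext x
        simp only [mem_inter_iff, mem_preimage, mem_singleton_iff, mem_empty_iff_false, false_and,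
          iff_false]
        rintro ⟨h1, rfl⟩
        exact h h1
  | empty => exact ⟨∅, @MeasurableSet.empty _ m, rfl⟩
  | compl t _ ih =>
    obtain ⟨A, hA, h⟩ := ih
    refine ⟨Aᶜ, hA.compl, ?_⟩
    ext x
    have := Set.ext_iff.1 h x
    simp only [mem_inter_iff, mem_compl_iff] at this ⊢
    tauto
  | iUnion f _ ih =>
    choose A hA h using ih
    refine ⟨⋃ n, A n, @MeasurableSet.iUnion _ _ m _ _ hA, ?_⟩
    rw [iUnion_inter, iUnion_inter]
    exact iUnion_congr h

lemma pair_preimage (ξ : Ω → ι) (η : Ω → κ) (i : ι) (j : κ) :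
    (fun x => (ξ x, η x)) ⁻¹' {(i, j)} = ξ ⁻¹' {i} ∩ η ⁻¹' {j} := by
  ext x; simp [Prod.ext_iff]

lemma measurableSet_pair {ξ : Ω → ι} {η : Ω → κ} (hξ : ∀ i, MeasurableSet (ξ ⁻¹' {i}))
    (hη : ∀ i, MeasurableSet (η ⁻¹' {i})) (p : ι × κ) :
    MeasurableSet ((fun x => (ξ x, η x)) ⁻¹' {p}) := by
  rw [← Prod.mk.eta (p := p), pair_preimage]
  exact (hξ _).inter (hη _)

lemma sup_comap_le [Countable ι] (hm : m ≤ mΩ) {ξ : Ω → ι} (hξ : ∀ i, MeasurableSet (ξ ⁻¹' {i})) :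
    m ⊔ MeasurableSpace.comap ξ ⊤ ≤ mΩ := by
  refine sup_le hm ?_
  rintro _ ⟨t, -, rfl⟩
  rw [← biUnion_preimage_singleton]
  exact MeasurableSet.biUnion t.to_countable fun i _ => hξ i

lemma sum_condProbVal_pair [Fintype κ] {ξ : Ω → ι} {η : Ω → κ}
    (hξ : ∀ i, MeasurableSet (ξ ⁻¹' {i})) (hη : ∀ i, MeasurableSet (η ⁻¹' {i})) (i : ι) :
    ∀ᵐ x ∂μ, ∑ j, condProbVal μ (fun x => (ξ x, η x)) m (i, j) x = condProbVal μ ξ m i x := by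
  have h := condExp_finsetSum (μ := μ) (s := Finset.univ)
    (f := fun j => ((fun x => (ξ x, η x)) ⁻¹' {(i, j)}).indicator (fun _ => (1 : ℝ)))
    (fun j _ => integrable_indVal (measurableSet_pair hξ hη _)) m
  have e : (∑ j, ((fun x => (ξ x, η x)) ⁻¹' {(i, j)}).indicator (fun _ => (1 : ℝ)))
      = (ξ ⁻¹' {i}).indicator (fun _ => (1 : ℝ)) := by
    classical
    funext x
    rw [Finset.sum_apply]
    simp only [pair_preimage, Set.indicator_apply, mem_inter_iff, mem_preimage, mem_singleton_iff]
    by_cases hx : ξ x = i <;> simp [hx]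
  rw [e] at h
  filter_upwards [h] with x hx
  rw [Finset.sum_apply] at hx
  exact hx.symm

/-- The conditional probability given `m` and a finite-valued `ξ` is the elementary quotient
`μ(ξ = i, η = j | m) / μ(ξ = i | m)` on `{ξ = i}`. -/
lemma condProbVal_sup [Fintype ι] [Fintype κ] (hm : m ≤ mΩ) {ξ : Ω → ι} {η : Ω → κ}
    (hξ : ∀ i, MeasurableSet (ξ ⁻¹' {i})) (hη : ∀ i, MeasurableSet (η ⁻¹' {i})) (j : κ) :
    condProbVal μ η (m ⊔ MeasurableSpace.comap ξ ⊤) j =ᵐ[μ] fun x => ∑ i, (ξ ⁻¹' {i}).indicator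
      (fun x => condProbVal μ (fun x => (ξ x, η x)) m (i, j) x / condProbVal μ ξ m i x) x := by
  have hM := sup_comap_le hm hξ
  have hmM : m ≤ m ⊔ MeasurableSpace.comap ξ ⊤ := le_sup_left
  have hξM : ∀ i, MeasurableSet[m ⊔ MeasurableSpace.comap ξ ⊤] (ξ ⁻¹' {i}) := fun i =>
    (le_sup_right : MeasurableSpace.comap ξ ⊤ ≤ m ⊔ MeasurableSpace.comap ξ ⊤) _ ⟨{i}, trivial, rfl⟩
  set q := fun i => condProbVal μ (fun x => (ξ x, η x)) m (i, j) with hq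
  set p := condProbVal μ ξ m with hp
  have hq0 : ∀ i, ∀ᵐ x ∂μ, 0 ≤ q i x := fun i => condProbVal_nonneg _ _
  have hp0 : ∀ i, ∀ᵐ x ∂μ, 0 ≤ p i x := fun i => condProbVal_nonneg _ _
  have hqp : ∀ i, ∀ᵐ x ∂μ, q i x ≤ p i x := by
    intro i
    filter_upwards [sum_condProbVal_pair (m := m) (μ := μ) hξ hη i,
      ae_all_iff.2 fun k => condProbVal_nonneg (m := m) (μ := μ) (fun x => (ξ x, η x)) (i, k)]
      with x h1 h2
    rw [hp, ← h1]
    exact Finset.single_le_sum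
      (f := fun k => condProbVal μ (fun x => (ξ x, η x)) m (i, k) x) (fun k _ => h2 k)
      (Finset.mem_univ j)
  have hqm : ∀ i, StronglyMeasurable[m] (q i) := fun i => stronglyMeasurable_condProbVal _ _
  have hpm : ∀ i, StronglyMeasurable[m] (p i) := fun i => stronglyMeasurable_condProbVal _ _
  have hgm : ∀ i, StronglyMeasurable[m] (fun x => q i x / p i x) := fun i =>
    ((hqm i).measurable.div (hpm i).measurable).stronglyMeasurable
  have hg0 : ∀ i, ∀ᵐ x ∂μ, 0 ≤ q i x / p i x := fun i => by
    filter_upwards [hq0 i, hp0 i] with x h1 h2 using div_nonneg h1 h2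
  have hgi : ∀ i, Integrable (fun x => q i x / p i x) μ := fun i => by
    refine Integrable.of_bound ((hgm i).mono hm).aestronglyMeasurable 1 ?_
    filter_upwards [hg0 i, hqp i, hp0 i] with x h0 h1 h2
    rw [Real.norm_of_nonneg h0]
    exact div_le_one_of_le₀ h1 h2
  have hGi : ∀ i, Integrable ((ξ ⁻¹' {i}).indicator fun x => q i x / p i x) μ := fun i =>
    (hgi i).indicator (hξ i)
  symm
  refine ae_eq_condExp_of_forall_setIntegral_eq hM (integrable_indVal (hη j))
    (fun s _ _ => (integrable_finsetSum _ fun i _ => hGi i).integrableOn) (fun s hs _ => ?_)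
    (Finset.stronglyMeasurable_fun_sum _ fun i _ =>
      ((hgm i).mono hmM).indicator (hξM i)).aestronglyMeasurable
  rw [integral_finsetSum _ fun i _ => (hGi i).integrableOn, setIntegral_indicator (hη j),
    setIntegral_const, smul_eq_mul, mul_one]
  have hs' : MeasurableSet s := hM _ hs
  have key : ∀ i, ∫ x in s, (ξ ⁻¹' {i}).indicator (fun x => q i x / p i x) x ∂μ
      = μ.real (s ∩ ξ ⁻¹' {i} ∩ η ⁻¹' {j}) := by
    intro i
    obtain ⟨A, hA, hAs⟩ := exists_of_measurableSet_sup_comap ξ hs i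
    rw [setIntegral_indicator (hξ i), hAs, inter_comm A, ← setIntegral_indicator (hm _ hA),
      setIntegral_eq_integral_condExp_mul hm (hξ i) ((hgm i).indicator hA)
        ((hg0 i).mono fun x hx => by
          classical
          rw [Set.indicator_apply]
          split_ifs
          exacts [hx, le_rfl])]
    have : ∫ x, μ[(ξ ⁻¹' {i}).indicator (fun _ => (1 : ℝ)) | m] x *
        A.indicator (fun x => q i x / p i x) x ∂μ = ∫ x, A.indicator (q i) x ∂μ := by
      refine integral_congr_ae ?_
      filter_upwards [hq0 i, hp0 i, hqp i] with x h1 h2 h3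
      by_cases hx : x ∈ A
      · simp only [hx, indicator_of_mem]
        change p i x * (q i x / p i x) = q i x
        rcases h2.eq_or_lt with h | h
        · rw [← h] at h3 ⊢
          rw [le_antisymm h3 h1]; simp
        · field_simp
      · simp [hx]
    rw [this, integral_indicator (hm _ hA), hq, setIntegral_condProbVal hm
      (measurableSet_pair hξ hη _) hA, pair_preimage, ← inter_assoc, inter_comm _ A]
  rw [Finset.sum_congr rfl fun i _ => key i, ← measureReal_biUnion_finset]
  · congr 1
    ext x
    simp
  · intro a _ b _ hab
    refine Set.disjoint_left.2 fun x hx hx' => hab ?_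
    exact hx.1.2.symm.trans hx'.1.2
  · exact fun i _ => (hs'.inter (hξ i)).inter (hη j)

/-- The chain rule `H(ξ, η | m) = H(ξ | m) + H(η | m ∨ ξ)`. -/
lemma cEnt_pair [Fintype ι] [Fintype κ] (hm : m ≤ mΩ) {ξ : Ω → ι} {η : Ω → κ}
    (hξ : ∀ i, MeasurableSet (ξ ⁻¹' {i})) (hη : ∀ i, MeasurableSet (η ⁻¹' {i})) :
    cEnt μ (fun x => (ξ x, η x)) m
      = cEnt μ ξ m + cEnt μ η (m ⊔ MeasurableSpace.comap ξ ⊤) := by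
  set q := condProbVal μ (fun x => (ξ x, η x)) m with hq
  set p := condProbVal μ ξ m with hp
  have hξη := measurableSet_pair hξ hη
  have hq0 : ∀ᵐ x ∂μ, ∀ k, 0 ≤ q k x := ae_all_iff.2 fun k => condProbVal_nonneg _ _
  have hp0 : ∀ᵐ x ∂μ, ∀ i, 0 ≤ p i x := ae_all_iff.2 fun i => condProbVal_nonneg _ _
  have hsum : ∀ᵐ x ∂μ, ∀ i, ∑ j, q (i, j) x = p i x :=
    ae_all_iff.2 fun i => sum_condProbVal_pair hξ hη i
  have hqp : ∀ᵐ x ∂μ, ∀ i j, q (i, j) x ≤ p i x := by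
    filter_upwards [hsum, hq0] with x h1 h2 i j
    rw [← h1]
    exact Finset.single_le_sum (f := fun k => q (i, k) x) (fun k _ => h2 _) (Finset.mem_univ j)
  have hqm : ∀ k, StronglyMeasurable[m] (q k) := fun i => stronglyMeasurable_condProbVal _ _
  have hpm : ∀ i, StronglyMeasurable[m] (p i) := fun i => stronglyMeasurable_condProbVal _ _
  have hgm : ∀ i j, StronglyMeasurable[m] (fun x => q (i, j) x / p i x) := fun i j =>
    ((hqm _).measurable.div (hpm i).measurable).stronglyMeasurable
  have hg0 : ∀ i j, ∀ᵐ x ∂μ, 0 ≤ q (i, j) x / p i x := fun i j => by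
    filter_upwards [hq0, hp0] with x h1 h2 using div_nonneg (h1 _) (h2 _)
  have hg1 : ∀ i j, ∀ᵐ x ∂μ, q (i, j) x / p i x ≤ 1 := fun i j => by
    filter_upwards [hqp, hp0] with x h1 h2 using div_le_one_of_le₀ (h1 _ _) (h2 _)
  have hgi : ∀ i j, Integrable (fun x => Real.negMulLog (q (i, j) x / p i x)) μ := fun i j =>
    integrable_negMulLog hm (hgm i j) (hg0 i j) (hg1 i j)
  have hpi : ∀ i, Integrable (fun x => Real.negMulLog (p i x)) μ := fun i =>
    integrable_negMulLog_condProbVal hm (hξ i)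
  have hqi : ∀ k, Integrable (fun x => Real.negMulLog (q k x)) μ := fun i =>
    integrable_negMulLog_condProbVal hm (hξη i)
  have hpgi : ∀ i j, Integrable (fun x => p i x * Real.negMulLog (q (i, j) x / p i x)) μ := by
    intro i j
    refine (hgi i j).bdd_mul ((hpm i).mono hm).aestronglyMeasurable (c := 1) ?_
    filter_upwards [hp0, condProbVal_le_one (μ := μ) hm (hξ i)] with x h0 h1
    rw [Real.norm_of_nonneg (h0 i)]
    exact h1
  have step : ∀ j, ∫ x, Real.negMulLog
      (condProbVal μ η (m ⊔ MeasurableSpace.comap ξ ⊤) j x) ∂μ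
      = ∑ i, ∫ x, p i x * Real.negMulLog (q (i, j) x / p i x) ∂μ := by
    intro j
    have h1 : ∫ x, Real.negMulLog (condProbVal μ η (m ⊔ MeasurableSpace.comap ξ ⊤) j x) ∂μ
        = ∫ x, ∑ i, (ξ ⁻¹' {i}).indicator
          (fun x => Real.negMulLog (q (i, j) x / p i x)) x ∂μ := by
      refine integral_congr_ae ?_
      filter_upwards [condProbVal_sup (μ := μ) hm hξ hη j] with x hx
      rw [hx]
      classical
      simp [Set.indicator_apply, hq, hp]
    rw [h1, integral_finsetSum _ fun i _ => (hgi i j).indicator (hξ i)]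
    refine Finset.sum_congr rfl fun i _ => ?_
    rw [integral_indicator (hξ i), setIntegral_eq_integral_condExp_mul hm (hξ i)
      (Real.continuous_negMulLog.comp_stronglyMeasurable (hgm i j))]
    · rfl
    · filter_upwards [hg0 i j, hg1 i j] with x h0 h1 using Real.negMulLog_nonneg h0 h1
  rw [cEnt, cEnt, cEnt, Finset.sum_congr rfl fun j _ => step j, Finset.sum_comm,
    ← Finset.sum_add_distrib, Fintype.sum_prod_type]
  refine Finset.sum_congr rfl fun i _ => ?_
  rw [← integral_finsetSum _ fun j _ => hqi _, ← integral_finsetSum _ fun j _ => hpgi i j,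
    ← integral_add (hpi i) (integrable_finsetSum _ fun j _ => hpgi i j)]
  refine integral_congr_ae ?_
  filter_upwards [hq0, hp0, hsum, hqp] with x h1 h2 h3 h4
  change _ = Real.negMulLog (p i x) + ∑ j, p i x * Real.negMulLog (q (i, j) x / p i x)
  rcases (h2 i).eq_or_lt with h | h
  · have : ∀ j, q (i, j) x = 0 := fun j => le_antisymm (h ▸ h4 i j) (h1 _)
    change ∑ j, Real.negMulLog (q (i, j) x) = _
    simp [this, ← h]
  · have : ∀ j, p i x * Real.negMulLog (q (i, j) x / p i x)
        = Real.negMulLog (q (i, j) x) + q (i, j) x * Real.log (p i x) := by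
      intro j
      rcases (h1 (i, j)).eq_or_lt with h' | h'
      · rw [← h']; simp
      · simp only [Real.negMulLog]
        rw [Real.log_div h'.ne' h.ne']
        field_simp
        ring
    rw [Finset.sum_congr rfl fun j _ => this j, Finset.sum_add_distrib, ← Finset.sum_mul, h3,
      Real.negMulLog]
    ring
end Entropy

/-! ### Entropy inequalities and limits -/

section Entropy

variable {Ω ι κ : Type*} {m mΩ : MeasurableSpace Ω} {μ : Measure Ω} [IsProbabilityMeasure μ]

omit [IsProbabilityMeasure μ] in
lemma cEnt_swap [Fintype ι] [Fintype κ] (ξ : Ω → ι) (η : Ω → κ) :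
    cEnt μ (fun x => (ξ x, η x)) m = cEnt μ (fun x => (η x, ξ x)) m := by
  rw [cEnt, cEnt, Fintype.sum_prod_type, Fintype.sum_prod_type_right]
  refine Finset.sum_congr rfl fun i _ => Finset.sum_congr rfl fun j _ => ?_
  simp only [condProbVal, pair_preimage, inter_comm]

lemma cEnt_eq_zero [Fintype κ] (hm : m ≤ mΩ) {η : Ω → κ} (h : ∀ j, MeasurableSet[m] (η ⁻¹' {j})) :
    cEnt μ η m = 0 := by
  refine Finset.sum_eq_zero fun j _ => ?_
  rw [condProbVal, condExp_of_stronglyMeasurable hm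
    (stronglyMeasurable_const.indicator (h j)) (integrable_indVal (hm _ (h j)))]
  refine integral_eq_zero_of_ae (Eventually.of_forall fun x => ?_)
  by_cases hx : x ∈ η ⁻¹' {j} <;> simp only [hx, indicator_of_mem, indicator_of_notMem,
    not_false_eq_true, Real.negMulLog_one, Real.negMulLog_zero, Pi.zero_apply]

omit [IsProbabilityMeasure μ] in
lemma measurableSet_comp [Countable ι] {ξ : Ω → ι} (hξ : ∀ i, MeasurableSet (ξ ⁻¹' {i}))
    (t : Set ι) : MeasurableSet (ξ ⁻¹' t) := by
  rw [← biUnion_preimage_singleton]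
  exact MeasurableSet.biUnion t.to_countable fun i _ => hξ i

lemma cEnt_pair_comp [Fintype ι] [Fintype κ] (hm : m ≤ mΩ) {ξ : Ω → ι}
    (hξ : ∀ i, MeasurableSet (ξ ⁻¹' {i})) (f : ι → κ) :
    cEnt μ (fun x => (ξ x, f (ξ x))) m = cEnt μ ξ m := by
  rw [cEnt_pair hm hξ (η := fun x => f (ξ x))
    (fun j => measurableSet_comp hξ (f ⁻¹' {j})), cEnt_eq_zero (sup_comap_le hm hξ), add_zero]
  exact fun j => (le_sup_right : MeasurableSpace.comap ξ ⊤ ≤ m ⊔ MeasurableSpace.comap ξ ⊤) _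
    ⟨f ⁻¹' {j}, trivial, rfl⟩

lemma cEnt_comp_le [Fintype ι] [Fintype κ] (hm : m ≤ mΩ) {ξ : Ω → ι}
    (hξ : ∀ i, MeasurableSet (ξ ⁻¹' {i})) (f : ι → κ) :
    cEnt μ (fun x => f (ξ x)) m ≤ cEnt μ ξ m := by
  have hη : ∀ j, MeasurableSet ((fun x => f (ξ x)) ⁻¹' {j}) :=
    fun j => measurableSet_comp hξ (f ⁻¹' {j})
  rw [← cEnt_pair_comp hm hξ f, cEnt_swap, cEnt_pair hm hη hξ]
  have := cEnt_nonneg (μ := μ) (sup_comap_le hm hη) hξ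
  linarith

/-- The entropy of `ξ` depends only on the partition it induces. -/
lemma cEnt_congr [Fintype ι] [Fintype κ] (hm : m ≤ mΩ) {ξ : Ω → ι} {η : Ω → κ}
    (hξ : ∀ i, MeasurableSet (ξ ⁻¹' {i})) (f : ι → κ) (g : κ → ι) (h1 : ∀ x, η x = f (ξ x))
    (h2 : ∀ x, ξ x = g (η x)) : cEnt μ ξ m = cEnt μ η m := by
  have hη : ∀ j, MeasurableSet (η ⁻¹' {j}) := fun j => by
    rw [show η = fun x => f (ξ x) from funext h1]
    exact measurableSet_comp hξ (f ⁻¹' {j})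
  apply le_antisymm
  · have := cEnt_comp_le (μ := μ) hm hη g
    rwa [← show ξ = fun x => g (η x) from funext h2] at this
  · have := cEnt_comp_le (μ := μ) hm hξ f
    rwa [← show η = fun x => f (ξ x) from funext h1] at this

/-- Discrete entropy is stable under recoding with bounded ambiguity: if `η` is determined by
`ξ` and an auxiliary variable with values in a finite type, then `H(η)` exceeds `H(ξ)` by at most
the logarithm of the size of that type. -/
lemma cEnt_bot_le_add_log {ε : Type*} [Fintype ι] [Fintype κ] [Fintype ε] {ξ : Ω → ι} {η : Ω → κ}
    {e : Ω → ε} (hξ : ∀ i, MeasurableSet (ξ ⁻¹' {i})) (he : ∀ i, MeasurableSet (e ⁻¹' {i}))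
    (hdet : ∀ x y, ξ x = ξ y → e x = e y → η x = η y) :
    cEnt μ η ⊥ ≤ cEnt μ ξ ⊥ + Real.log (Fintype.card ε) := by
  obtain ⟨f, h⟩ : ∃ f : ι × ε → κ, ∀ x, η x = f (ξ x, e x) := by
    have hne := nonempty_of_isProbabilityMeasure μ
    refine ⟨Function.extend (fun x => (ξ x, e x)) η fun _ => η hne.some, fun x => ?_⟩
    refine (Function.FactorsThrough.extend_apply (g := η) (fun a b hab => ?_) _ x).symm
    exact hdet a b (Prod.ext_iff.1 hab).1 (Prod.ext_iff.1 hab).2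
  rw [show η = fun x => f (ξ x, e x) from funext h]
  refine (cEnt_comp_le bot_le (measurableSet_pair hξ he) f).trans ?_
  rw [cEnt_pair bot_le hξ he]
  gcongr
  exact cEnt_le_log_card (sup_comap_le bot_le hξ) he Finset.univ fun _ => Finset.mem_univ _

/-- `H(ξ, η) = H(η) + H(ξ | η)`. -/
lemma cEnt_bot_pair [Fintype ι] [Fintype κ] {ξ : Ω → ι} {η : Ω → κ}
    (hξ : ∀ i, MeasurableSet (ξ ⁻¹' {i})) (hη : ∀ i, MeasurableSet (η ⁻¹' {i})) :
    cEnt μ (fun x => (ξ x, η x)) ⊥ = cEnt μ η ⊥ + cEnt μ ξ (MeasurableSpace.comap η ⊤) := by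
  rw [cEnt_swap, cEnt_pair bot_le hη hξ, bot_sup_eq]

lemma cEnt_comp_measurePreserving [Fintype ι] (hm : m ≤ mΩ) {T : Ω → Ω}
    (hT : MeasurePreserving T μ μ) {ξ : Ω → ι} (hξ : ∀ i, MeasurableSet (ξ ⁻¹' {i})) :
    cEnt μ (fun x => ξ (T x)) (m.comap T) = cEnt μ ξ m := by
  refine Finset.sum_congr rfl fun i _ => ?_
  have hmT : m.comap T ≤ mΩ := by
    rintro _ ⟨s, hs, rfl⟩
    exact hT.measurable (hm _ hs)
  have hTm : Measurable[m.comap T, m] T := comap_measurable T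
  have key : (fun x => condProbVal μ ξ m i (T x))
      =ᵐ[μ] condProbVal μ (fun x => ξ (T x)) (m.comap T) i := by
    refine ae_eq_condExp_of_forall_setIntegral_eq hmT (integrable_indVal (hT.measurable (hξ i)))
      (fun s _ _ => ?_) (fun s hs _ => ?_)
      ((stronglyMeasurable_condProbVal ξ i).comp_measurable hTm).aestronglyMeasurable
    · exact (hT.integrable_comp_of_integrable integrable_condExp).integrableOn
    · obtain ⟨A, hA, rfl⟩ := hs
      have h1 := setIntegral_condProbVal (μ := μ) hm (hξ i) hA
      rw [← hT.map_eq, setIntegral_map (hm _ hA) _ hT.aemeasurable, hT.map_eq] at h1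
      · rw [h1]
        change _ = ∫ x in T ⁻¹' A, (T ⁻¹' (ξ ⁻¹' {i})).indicator (fun _ => (1 : ℝ)) x ∂μ
        rw [setIntegral_indicator (hT.measurable (hξ i)), setIntegral_const, smul_eq_mul,
          mul_one, ← preimage_inter,
          measureReal_def, measureReal_def,
          hT.measure_preimage ((hm _ hA).inter (hξ i)).nullMeasurableSet]
      · rw [hT.map_eq]
        exact integrable_condExp.aestronglyMeasurable
  have h2 : ∫ x, Real.negMulLog (condProbVal μ (fun x => ξ (T x)) (m.comap T) i x) ∂μ
      = ∫ x, Real.negMulLog (condProbVal μ ξ m i (T x)) ∂μ := by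
    refine integral_congr_ae ?_
    filter_upwards [key] with x hx
    rw [hx]
  rw [h2]
  have h3 : AEStronglyMeasurable (fun x => Real.negMulLog (condProbVal μ ξ m i x)) (μ.map T) := by
    rw [hT.map_eq]
    exact (integrable_negMulLog_condProbVal hm (hξ i)).aestronglyMeasurable
  have := integral_map hT.aemeasurable h3
  rw [hT.map_eq] at this
  exact this.symm

/-- Lévy's upward theorem for conditional entropies. -/
lemma tendsto_cEnt [Fintype ι] (f : ℕ → MeasurableSpace Ω) (hf : Monotone f) (hfm : ∀ n, f n ≤ mΩ)
    (hsup : ⨆ n, f n = m) {ξ : Ω → ι} (hξ : ∀ i, MeasurableSet (ξ ⁻¹' {i})) :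
    Tendsto (fun n => cEnt μ ξ (f n)) atTop (nhds (cEnt μ ξ m)) := by
  subst hsup
  let F : Filtration ℕ mΩ := ⟨f, hf, hfm⟩
  refine tendsto_finsetSum _ fun i _ => ?_
  refine tendsto_integral_of_dominated_convergence (fun _ => 1)
    (fun n => (integrable_negMulLog_condProbVal (hfm n) (hξ i)).aestronglyMeasurable)
    (integrable_const _) (fun n => ?_) ?_
  · filter_upwards [condProbVal_nonneg (m := f n) (μ := μ) ξ i, condProbVal_le_one (hfm n) (hξ i)]
      with x h0 h1
    rw [Real.norm_of_nonneg (Real.negMulLog_nonneg h0 h1)]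
    exact negMulLog_le_one h0
  · filter_upwards [tendsto_ae_condExp (μ := μ) (ℱ := F)
      ((ξ ⁻¹' {i}).indicator (fun _ => (1 : ℝ)))] with x hx
    exact (Real.continuous_negMulLog.tendsto _).comp hx

/-- A random element that is a measurable function of another one on each fibre of `ξ` is measurable
with respect to the σ-algebra generated by that element and `ξ`. -/
lemma comap_le_sup_of_eq {E E' : Type*} [mE : MeasurableSpace E] [mE' : MeasurableSpace E']
    [Countable ι] (ξ : Ω → ι) (Y : Ω → E) (Y' : Ω → E') (Φ : ι → E' → E)
    (hΦ : ∀ i, Measurable (Φ i)) (h : ∀ x, Y x = Φ (ξ x) (Y' x)) :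
    MeasurableSpace.comap Y mE ≤ MeasurableSpace.comap Y' mE' ⊔ MeasurableSpace.comap ξ ⊤ := by
  rintro _ ⟨B, hB, rfl⟩
  have : Y ⁻¹' B = ⋃ i, (Y' ⁻¹' (Φ i ⁻¹' B) ∩ ξ ⁻¹' {i}) := by
    ext x
    simp [h x]
  rw [this]
  refine @MeasurableSet.iUnion _ _ (_) _ _ fun i => @MeasurableSet.inter _ (_) _ _ ?_ ?_
  · exact (le_sup_left : MeasurableSpace.comap Y' mE' ≤ _) _ ⟨_, hΦ i hB, rfl⟩
  · exact (le_sup_right : MeasurableSpace.comap ξ ⊤ ≤ _) _ ⟨_, trivial, rfl⟩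

end Entropy

/-! ### Coding maps and the power rule -/

/-- The properties of the coding map `π` of the self-similar set `range π` that the argument uses:
`A` is an invertible similarity of ratio `ρ ∈ (0, 1)`, and `π` is a bounded measurable map with
compact range satisfying `π x = A (π (σ x)) + c (x 0)`. -/
structure IsCoding {d l : ℕ} (A : EuclideanSpace ℝ (Fin d) →L[ℝ] EuclideanSpace ℝ (Fin d))
    (c : Fin l → EuclideanSpace ℝ (Fin d)) (π : Sig l → EuclideanSpace ℝ (Fin d))
    (ρ R : ℝ) : Prop where
  pos : 0 < ρ
  lt_one : ρ < 1
  norm : ∀ v, ‖A v‖ = ρ * ‖v‖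
  inv : ∃ B : EuclideanSpace ℝ (Fin d) →L[ℝ] EuclideanSpace ℝ (Fin d), ∀ v, B (A v) = v ∧ A (B v) = v
  meas : Measurable π
  eq : ∀ x, π x = A (π (shift x)) + c (x 0)
  bdd : ∀ x, ‖π x‖ ≤ R
  compact : IsCompact (range π)

/-- The word formed by the first `n` letters of a sequence. -/
def word {l : ℕ} (n : ℕ) (x : Sig l) : Fin n → Fin l := fun i => x i

/-- The translation part of `S_{w 0} ∘ ⋯ ∘ S_{w (n-1)}`, whose linear part is `A ^ n`. -/
def wordTrans {d l : ℕ} (A : EuclideanSpace ℝ (Fin d) →L[ℝ] EuclideanSpace ℝ (Fin d))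
    (c : Fin l → EuclideanSpace ℝ (Fin d)) : (n : ℕ) → (Fin n → Fin l) → EuclideanSpace ℝ (Fin d)
  | 0, _ => 0
  | n + 1, w => A (wordTrans A c n fun i => w i.succ) + c (w 0)

lemma shift_iterate_apply {l : ℕ} (n : ℕ) (x : Sig l) (i : ℕ) : (shift^[n] x) i = x (i + n) := by
  induction n generalizing x with
  | zero => rfl
  | succ n ih => rw [Function.iterate_succ_apply, ih, shift]; congr 1

lemma measurable_shift {l : ℕ} : Measurable (shift : Sig l → Sig l) :=
  measurable_pi_lambda _ fun n => measurable_pi_apply (n + 1)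

lemma measurableSet_word {l : ℕ} (n : ℕ) (w : Fin n → Fin l) :
    MeasurableSet (word n ⁻¹' {w} : Set (Sig l)) :=
  (measurable_pi_lambda (word n) fun i => measurable_pi_apply (i : ℕ)) (measurableSet_singleton w)

lemma measurableSet_coord {l : ℕ} (n : ℕ) (j : Fin l) :
    MeasurableSet ((fun x : Sig l => x n) ⁻¹' {j}) :=
  measurable_pi_apply n (measurableSet_singleton j)

lemma eq_wordTrans {d l : ℕ} {A : EuclideanSpace ℝ (Fin d) →L[ℝ] EuclideanSpace ℝ (Fin d)}
    {c : Fin l → EuclideanSpace ℝ (Fin d)} {π : Sig l → EuclideanSpace ℝ (Fin d)}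
    (h : ∀ x, π x = A (π (shift x)) + c (x 0)) (n : ℕ) (x : Sig l) :
    π x = (A ^ n) (π (shift^[n] x)) + wordTrans A c n (word n x) := by
  induction n generalizing x with
  | zero => simp [wordTrans]
  | succ n ih =>
    rw [h x, ih (shift x), map_add, ← mul_apply_eq_comp, ← pow_succ',
      Function.iterate_succ_apply, wordTrans, add_assoc]
    rfl

namespace IsCoding

variable {d l : ℕ} {A : EuclideanSpace ℝ (Fin d) →L[ℝ] EuclideanSpace ℝ (Fin d)}
  {c : Fin l → EuclideanSpace ℝ (Fin d)} {π : Sig l → EuclideanSpace ℝ (Fin d)} {ρ R : ℝ}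

lemma norm_pow (h : IsCoding A c π ρ R) (n : ℕ) (v : EuclideanSpace ℝ (Fin d)) :
    ‖(A ^ n) v‖ = ρ ^ n * ‖v‖ := by
  induction n generalizing v with
  | zero => simp
  | succ n ih => rw [pow_succ, mul_apply_eq_comp, ih, h.norm]; ring

lemma inv_pow (h : IsCoding A c π ρ R) (n : ℕ) :
    ∃ B : EuclideanSpace ℝ (Fin d) →L[ℝ] EuclideanSpace ℝ (Fin d),
      ∀ v, B ((A ^ n) v) = v ∧ (A ^ n) (B v) = v := by
  induction n with
  | zero => exact ⟨1, fun v => by simp⟩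
  | succ n ih =>
    obtain ⟨B, hB⟩ := h.inv
    obtain ⟨C, hC⟩ := ih
    refine ⟨B * C, fun v => ⟨?_, ?_⟩⟩
    · rw [pow_succ', mul_apply_eq_comp, mul_apply_eq_comp]
      have : (A * A ^ n) = A ^ n * A := by rw [← pow_succ, pow_succ']
      rw [← mul_apply_eq_comp A, this, mul_apply_eq_comp, (hC _).1, (hB _).1]
    · rw [pow_succ, mul_apply_eq_comp, mul_apply_eq_comp, (hB _).2, (hC _).2]

lemma eq_word (h : IsCoding A c π ρ R) (n : ℕ) (x : Sig l) :
    π x = (A ^ n) (π (shift^[n] x)) + wordTrans A c n (word n x) :=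
  eq_wordTrans h.eq n x

/-- The σ-algebra generated by `π ∘ σ^n`. -/
abbrev mY (π : Sig l → EuclideanSpace ℝ (Fin d)) (n : ℕ) : MeasurableSpace (Sig l) :=
  MeasurableSpace.comap (fun x => π (shift^[n] x)) inferInstance

lemma mY_le (h : IsCoding A c π ρ R) (n : ℕ) : mY π n ≤ MeasurableSpace.pi := by
  rintro _ ⟨s, hs, rfl⟩
  exact h.meas.comp (measurable_shift.iterate n) hs

/-- Once the letter `x n` is known, `π (σ^n x)` and `π (σ^(n+1) x)` determine each other. -/
lemma mY_succ_sup (h : IsCoding A c π ρ R) (n : ℕ) :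
    mY π (n + 1) ⊔ MeasurableSpace.comap (fun x : Sig l => x n) ⊤
      = mY π n ⊔ MeasurableSpace.comap (fun x : Sig l => x n) ⊤ := by
  obtain ⟨B, hB⟩ := h.inv
  have e : ∀ x : Sig l, π (shift^[n] x) = A (π (shift^[n + 1] x)) + c (x n) := fun x => by
    rw [h.eq, Function.iterate_succ_apply', shift_iterate_apply, zero_add]
  refine le_antisymm (sup_le ?_ le_sup_right) (sup_le ?_ le_sup_right)
  · refine comap_le_sup_of_eq _ _ _ (fun j y => B (y - c j)) (fun j => by fun_prop) fun x => ?_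
    rw [e x, add_sub_cancel_right, (hB _).1]
  · exact comap_le_sup_of_eq _ _ _ (fun j y => A y + c j) (fun j => by fun_prop) e

/-- Once the first `n` letters are known, `π x` and `π (σ^n x)` determine each other. -/
lemma mY_zero_sup (h : IsCoding A c π ρ R) (n : ℕ) :
    mY π 0 ⊔ MeasurableSpace.comap (word n) ⊤ = mY π n ⊔ MeasurableSpace.comap (word n) ⊤ := by
  obtain ⟨B, hB⟩ := h.inv_pow n
  refine le_antisymm (sup_le ?_ le_sup_right) (sup_le ?_ le_sup_right)
  · exact comap_le_sup_of_eq _ _ _ (fun w y => (A ^ n) y + wordTrans A c n w)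
      (fun j => by fun_prop) (h.eq_word n)
  · refine comap_le_sup_of_eq _ _ _ (fun w y => B (y - wordTrans A c n w)) (fun j => by fun_prop)
      fun x => ?_
    rw [Function.iterate_zero, id, h.eq_word n x, add_sub_cancel_right, (hB _).1]

lemma mY_comap (π : Sig l → EuclideanSpace ℝ (Fin d)) (n k : ℕ) :
    (mY π n).comap (shift^[k]) = mY π (n + k) := by
  rw [mY, MeasurableSpace.comap_comp, mY]
  congr 1
  funext x
  simp [Function.iterate_add_apply]

variable {μ : Measure (Sig l)} [IsProbabilityMeasure μ]

lemma projEntropy_eq (h : IsCoding A c π ρ R) : projEntropy π μ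
    = cEnt μ (fun x : Sig l => x 0) (mY π 1) - cEnt μ (fun x : Sig l => x 0) (mY π 0) := by
  rw [← condEntropyPart_eq_cEnt (h.mY_le 1) (measurableSet_coord 0),
    ← condEntropyPart_eq_cEnt (h.mY_le 0) (measurableSet_coord 0)]
  rfl

/-- This bound makes the supremum of the projection entropies finite. -/
lemma projEntropy_le (h : IsCoding A c π ρ R) : projEntropy π μ ≤ Real.log l := by
  rw [h.projEntropy_eq]
  have h1 := cEnt_le_log_card (μ := μ) (h.mY_le 1) (measurableSet_coord 0) Finset.univ
    fun _ => Finset.mem_univ _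
  have h2 := cEnt_nonneg (μ := μ) (h.mY_le 0) (measurableSet_coord 0)
  rw [Finset.card_univ, Fintype.card_fin] at h1
  linarith

lemma cEnt_word_succ {m : MeasurableSpace (Sig l)} (hm : m ≤ MeasurableSpace.pi) (n : ℕ) :
    cEnt μ (word (n + 1)) m = cEnt μ (fun x : Sig l => (word n x, x n)) m := by
  refine cEnt_congr hm (measurableSet_word (n + 1))
    (fun w => (fun i => w i.castSucc, w (Fin.last n)))
    (fun p => Fin.snoc (α := fun _ => Fin l) p.1 p.2) (fun x => rfl) fun x => ?_
  funext i
  refine Fin.lastCases ?_ (fun i => ?_) i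
  · simp [word]
  · simp [word]

/-- The power rule for projection entropy: `n h_π(σ, μ)` is the projection entropy of the `n`-th
iterate of the shift. -/
lemma power_rule (h : IsCoding A c π ρ R) (hμ : MeasurePreserving shift μ μ) (n : ℕ) :
    cEnt μ (word n) (mY π n) - cEnt μ (word n) (mY π 0) = n * projEntropy π μ := by
  induction n with
  | zero => simp
  | succ n ih =>
    have hw := measurableSet_word (l := l) n
    have ha := measurableSet_coord (l := l) n
    have s1 : ∀ k, cEnt μ (fun x : Sig l => x n) (mY π (k + n))
        = cEnt μ (fun x : Sig l => x 0) (mY π k) := fun k => by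
      rw [← cEnt_comp_measurePreserving (h.mY_le k) (hμ.iterate n) (measurableSet_coord 0),
        mY_comap]
      simp only [shift_iterate_apply, zero_add]
    have s1a := s1 1
    have s1b := s1 0
    rw [zero_add] at s1b
    rw [add_comm] at s1a
    have s2 := cEnt_pair (μ := μ) (h.mY_le (n + 1)) ha hw
    rw [h.mY_succ_sup] at s2
    have s3 := cEnt_pair (μ := μ) (h.mY_le 0) hw ha
    rw [h.mY_zero_sup] at s3
    have s4 := cEnt_pair (μ := μ) (h.mY_le n) hw ha
    have s5 := cEnt_pair (μ := μ) (h.mY_le n) ha hw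
    rw [cEnt_swap] at s2 s5
    rw [cEnt_word_succ (h.mY_le _), cEnt_word_succ (h.mY_le _)]
    push_cast
    rw [add_mul, one_mul, ← ih, h.projEntropy_eq]
    linarith

end IsCoding

/-! ### Dyadic discretizations -/

lemma norm_le_card_mul {d : ℕ} (v : EuclideanSpace ℝ (Fin d)) {a : ℝ} (ha : 0 ≤ a)
    (h : ∀ i, |v i| ≤ a) : ‖v‖ ≤ d * a := by
  rw [EuclideanSpace.norm_eq]
  refine Real.sqrt_le_iff.2 ⟨by positivity, ?_⟩
  calc ∑ i, ‖v i‖ ^ 2 ≤ ∑ _i : Fin d, a ^ 2 := by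
        gcongr with i
        exact h i
    _ = d * a ^ 2 := by simp
    _ ≤ (d * a) ^ 2 := by
        rw [mul_pow]
        gcongr
        exact_mod_cast Nat.le_self_pow two_ne_zero d

lemma floor_two_pow_mem {r R : ℝ} (h : |r| ≤ R) (k : ℕ) :
    ⌊2 ^ k * r⌋ ∈ Icc (-(2 ^ k * ⌈R⌉) : ℤ) (2 ^ k * ⌈R⌉) := by
  obtain ⟨h1, h2⟩ := abs_le.1 h
  have hR := Int.le_ceil R
  have hk : (0 : ℝ) < 2 ^ k := by positivity
  constructor
  · rw [Int.le_floor]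
    push_cast
    nlinarith
  · have := Int.floor_le (2 ^ k * r)
    have h3 : ((⌊2 ^ k * r⌋ : ℤ) : ℝ) ≤ ((2 ^ k * ⌈R⌉ : ℤ) : ℝ) := by
      push_cast
      nlinarith
    exact_mod_cast h3

/-- Dyadic cubes are nested. -/
lemma floor_two_pow_congr {a b : ℝ} {k : ℕ} (h : ⌊2 ^ (k + 1) * a⌋ = ⌊2 ^ (k + 1) * b⌋) :
    ⌊2 ^ k * a⌋ = ⌊2 ^ k * b⌋ := by
  have key : ∀ r : ℝ, ⌊2 ^ k * r⌋ = ⌊2 ^ (k + 1) * r⌋ / 2 := fun r => by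
    have := Int.floor_div_natCast (2 ^ (k + 1) * r) 2
    rw [← Nat.cast_ofNat (R := ℤ), ← this]
    congr 1
    rw [pow_succ]
    push_cast
    ring
  rw [key, key, h]

lemma comap_le_comap_of_factors {Ω ι κ : Type*} {q : Ω → ι} {q' : Ω → κ}
    (h : ∀ x y, q' x = q' y → q x = q y) :
    MeasurableSpace.comap q ⊤ ≤ MeasurableSpace.comap q' ⊤ := by
  rintro _ ⟨t, -, rfl⟩
  refine ⟨q' '' (q ⁻¹' t), trivial, ?_⟩
  ext x
  simp only [mem_preimage, mem_image]
  exact ⟨fun ⟨y, hy, hxy⟩ => h y x hxy ▸ hy, fun hx => ⟨x, hx, rfl⟩⟩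

namespace IsCoding

variable {d l : ℕ} {A : EuclideanSpace ℝ (Fin d) →L[ℝ] EuclideanSpace ℝ (Fin d)}
  {c : Fin l → EuclideanSpace ℝ (Fin d)} {π : Sig l → EuclideanSpace ℝ (Fin d)} {ρ R : ℝ}

lemma abs_le (h : IsCoding A c π ρ R) (x : Sig l) (i : Fin d) : |π x i| ≤ R :=
  (PiLp.norm_apply_le (π x) i).trans (h.bdd x)

/-- The finite type of coordinate vectors of the dyadic cubes of side `2 ^ (-k)` that may meet
the ball of radius `R`. -/
abbrev Cell (d : ℕ) (R : ℝ) (k : ℕ) : Type :=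
  Fin d → Icc (-(2 ^ k * ⌈R⌉) : ℤ) (2 ^ k * ⌈R⌉)

/-- The dyadic cube of side `2 ^ (-k)` containing `π x`. -/
def disc (h : IsCoding A c π ρ R) (k : ℕ) (x : Sig l) : Cell d R k :=
  fun i => ⟨⌊2 ^ k * π x i⌋, floor_two_pow_mem (h.abs_le x i) k⟩

/-- The lower corner of a dyadic cube. -/
def corner {R : ℝ} {k : ℕ} (b : Cell d R k) : EuclideanSpace ℝ (Fin d) :=
  WithLp.toLp 2 fun i => ((b i : ℤ) : ℝ) / 2 ^ k

lemma disc_eq_iff (h : IsCoding A c π ρ R) {k : ℕ} {x y : Sig l} :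
    h.disc k x = h.disc k y ↔ ∀ i, ⌊2 ^ k * π x i⌋ = ⌊2 ^ k * π y i⌋ := by
  simp [disc, funext_iff]

lemma measurable_coord (h : IsCoding A c π ρ R) (i : Fin d) : Measurable fun x => π x i :=
  (EuclideanSpace.proj (𝕜 := ℝ) i).continuous.measurable.comp h.meas

lemma measurable_disc (h : IsCoding A c π ρ R) (k : ℕ) : Measurable (h.disc k) :=
  measurable_pi_lambda _ fun i =>
    (Int.measurable_floor.comp ((h.measurable_coord i).const_mul _)).subtype_mk

lemma measurableSet_disc (h : IsCoding A c π ρ R) (k : ℕ) (b : Cell d R k) :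
    MeasurableSet (h.disc k ⁻¹' {b}) := h.measurable_disc k (measurableSet_singleton b)

lemma measurableSet_disc_shift (h : IsCoding A c π ρ R) (k n : ℕ) (b : Cell d R k) :
    MeasurableSet ((fun x => h.disc k (shift^[n] x)) ⁻¹' {b}) :=
  (measurable_shift.iterate n) (h.measurableSet_disc k b)

lemma norm_sub_corner (h : IsCoding A c π ρ R) (k : ℕ) (x : Sig l) :
    ‖π x - corner (h.disc k x)‖ ≤ d * (2 ^ k)⁻¹ := by
  refine norm_le_card_mul _ (by positivity) fun i => ?_
  have h1 := Int.floor_le (2 ^ k * π x i)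
  have h2 := Int.lt_floor_add_one (2 ^ k * π x i)
  have hk : (0 : ℝ) < 2 ^ k := by positivity
  have : (π x - corner (h.disc k x)) i = (2 ^ k * π x i - ⌊2 ^ k * π x i⌋) * (2 ^ k)⁻¹ := by
    simp only [corner, disc, PiLp.sub_apply]
    field_simp
  rw [this, abs_of_nonneg (mul_nonneg (by linarith) (by positivity))]
  refine mul_le_of_le_one_left (by positivity) (by linarith)

/-- The dyadic discretizations of all scales together generate the σ-algebra of `π`, since
`π` is the limit of the corners of its cubes. -/
lemma iSup_comap_disc (h : IsCoding A c π ρ R) :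
    ⨆ k, MeasurableSpace.comap (h.disc k) ⊤ = mY π 0 := by
  apply le_antisymm
  · refine iSup_le fun k => ?_
    rintro _ ⟨t, -, rfl⟩
    refine ⟨{y | ∃ b ∈ t, ∀ i, ⌊2 ^ k * y i⌋ = b i}, ?_, ?_⟩
    · have : {y : EuclideanSpace ℝ (Fin d) | ∃ b ∈ t, ∀ i, ⌊2 ^ k * y i⌋ = b i}
          = ⋃ b ∈ t, ⋂ i, {y | ⌊2 ^ k * y i⌋ = b i} := by ext; simp
      rw [this]
      refine MeasurableSet.biUnion t.to_countable fun b _ => MeasurableSet.iInter fun i => ?_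
      exact (Int.measurable_floor.comp (((EuclideanSpace.proj (𝕜 := ℝ) i).continuous.measurable
        ).const_mul _)) (measurableSet_singleton _)
    · ext x
      simp only [mem_preimage, mem_ofPred_eq, Function.iterate_zero, id]
      constructor
      · rintro ⟨b, hb, hx⟩
        have : h.disc k x = b := funext fun i => Subtype.ext (hx i)
        rwa [this]
      · exact fun hx => ⟨_, hx, fun i => rfl⟩
  · rw [← measurable_iff_comap_le]
    refine @measurable_of_tendsto_metrizable _ _ (_) _ _ _ _
      (fun k x => corner (h.disc k x)) _ (fun k => ?_) ?_
    · refine Measurable.mono ?_ (le_iSup (fun k => MeasurableSpace.comap (h.disc k) ⊤) k) le_rfl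
      exact (measurable_from_top (f := corner)).comp (comap_measurable (h.disc k))
    · refine tendsto_pi_nhds.2 fun x => ?_
      rw [tendsto_iff_norm_sub_tendsto_zero]
      have h0 : Tendsto (fun k : ℕ => (d : ℝ) * (2 ^ k)⁻¹) atTop (nhds 0) := by
        have := (tendsto_pow_atTop_nhds_zero_of_lt_one (r := (2 : ℝ)⁻¹) (by norm_num)
          (by norm_num)).const_mul (d : ℝ)
        simpa using this
      refine squeeze_zero (fun _ => norm_nonneg _) (fun k => ?_) h0
      rw [norm_sub_rev]
      exact h.norm_sub_corner k x

lemma monotone_comap_disc (h : IsCoding A c π ρ R) :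
    Monotone fun k => MeasurableSpace.comap (h.disc k) ⊤ :=
  monotone_nat_of_le_succ fun _ => comap_le_comap_of_factors fun _ _ hxy =>
    h.disc_eq_iff.2 fun i => floor_two_pow_congr (h.disc_eq_iff.1 hxy i)

variable {μ : Measure (Sig l)} [IsProbabilityMeasure μ]

lemma comap_disc_le (h : IsCoding A c π ρ R) (k : ℕ) :
    MeasurableSpace.comap (h.disc k) ⊤ ≤ MeasurableSpace.pi :=
  (le_iSup (fun k => MeasurableSpace.comap (h.disc k) ⊤) k).trans
    (h.iSup_comap_disc.trans_le (h.mY_le 0))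

lemma tendsto_cEnt_disc (h : IsCoding A c π ρ R) (n : ℕ) :
    Tendsto (fun k => cEnt μ (word n) (MeasurableSpace.comap (h.disc k) ⊤)) atTop
      (nhds (cEnt μ (word n) (mY π 0))) :=
  tendsto_cEnt _ h.monotone_comap_disc h.comap_disc_le h.iSup_comap_disc (measurableSet_word n)

lemma tendsto_cEnt_disc_shift (h : IsCoding A c π ρ R) (n : ℕ) :
    Tendsto (fun k => cEnt μ (word n)
      (MeasurableSpace.comap (fun x => h.disc k (shift^[n] x)) ⊤)) atTop
      (nhds (cEnt μ (word n) (mY π n))) := by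
  have e : ∀ k, MeasurableSpace.comap (fun x => h.disc k (shift^[n] x)) ⊤
      = (MeasurableSpace.comap (h.disc k) ⊤).comap (shift^[n]) := fun k => by
    rw [MeasurableSpace.comap_comp]; rfl
  simp only [e]
  refine tendsto_cEnt _ (fun a b hab => MeasurableSpace.comap_mono (h.monotone_comap_disc hab))
    (fun k => ?_) ?_ (measurableSet_word n)
  · rintro _ ⟨s, hs, rfl⟩
    exact (measurable_shift.iterate n) (h.comap_disc_le k _ hs)
  · rw [← MeasurableSpace.comap_iSup, h.iSup_comap_disc, mY_comap, zero_add]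

/-- The bound, independent of scale and word length, for the ambiguity in comparing the
discretizations of `π` and of `π ∘ σ^n`. -/
def recodeConst (d : ℕ) : ℝ :=
  Real.log (Fintype.card (Fin d → Icc (-(2 * d + 1) : ℤ) (2 * d + 1)))

/-- If `2 ^ k π(σ^a x)` is known from `ξ` up to a bounded error, then so is its dyadic cube up to
boundedly many choices. -/
lemma recode {ι κ : Type*} [Fintype ι] [Fintype κ] (h : IsCoding A c π ρ R) (k a : ℕ)
    {ξ : Sig l → ι} (hξ : ∀ i, MeasurableSet (ξ ⁻¹' {i})) (u : ι → κ)
    (G : ι → EuclideanSpace ℝ (Fin d))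
    (hG : ∀ x, ‖(2 : ℝ) ^ k • π (shift^[a] x) - G (ξ x)‖ ≤ 2 * d) :
    cEnt μ (fun x => (u (ξ x), h.disc k (shift^[a] x))) ⊥ ≤ cEnt μ ξ ⊥ + recodeConst d := by
  have hmem : ∀ x i, ⌊2 ^ k * π (shift^[a] x) i⌋ - ⌊G (ξ x) i⌋
      ∈ Icc (-(2 * d + 1) : ℤ) (2 * d + 1) := by
    intro x i
    have h1 := (PiLp.norm_apply_le _ i).trans (hG x)
    simp only [PiLp.sub_apply, PiLp.smul_apply, smul_eq_mul, Real.norm_eq_abs] at h1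
    obtain ⟨h2, h3⟩ := _root_.abs_le.1 h1
    have f1 := Int.floor_le (2 ^ k * π (shift^[a] x) i)
    have f2 := Int.lt_floor_add_one (2 ^ k * π (shift^[a] x) i)
    have f3 := Int.floor_le (G (ξ x) i)
    have f4 := Int.lt_floor_add_one (G (ξ x) i)
    constructor
    · have : ((-(2 * d + 1) - 1 : ℤ) : ℝ)
          < ((⌊2 ^ k * π (shift^[a] x) i⌋ - ⌊G (ξ x) i⌋ : ℤ) : ℝ) := by
        push_cast
        linarith
      have := Int.cast_lt.1 this
      omega
    · have : ((⌊2 ^ k * π (shift^[a] x) i⌋ - ⌊G (ξ x) i⌋ : ℤ) : ℝ)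
          < (((2 * d + 1) + 1 : ℤ) : ℝ) := by
        push_cast
        linarith
      have := Int.cast_lt.1 this
      omega
  let e : Sig l → (Fin d → Icc (-(2 * d + 1) : ℤ) (2 * d + 1)) := fun x i =>
    ⟨⌊2 ^ k * π (shift^[a] x) i⌋ - ⌊G (ξ x) i⌋, hmem x i⟩
  have he : Measurable e := by
    refine measurable_pi_lambda _ fun i => Measurable.subtype_mk ?_
    refine (Int.measurable_floor.comp (((h.measurable_coord i).comp
      (measurable_shift.iterate a)).const_mul _)).sub ?_
    intro s _
    exact measurableSet_comp hξ ((fun j => ⌊G j i⌋) ⁻¹' s)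
  refine cEnt_bot_le_add_log hξ (fun i => he (measurableSet_singleton i)) fun x y hxy hexy => ?_
  refine Prod.ext (congrArg u hxy) (h.disc_eq_iff.2 fun i => ?_)
  have := congrArg Subtype.val (congrFun hexy i)
  simp only [e, hxy] at this
  linarith

end IsCoding

/-! ### Entropy growth of the discretizations -/

/-- A sequence of multiples with bounded error determines the order of the slopes. -/
lemma le_of_forall_nat_mul_le {a b C : ℝ} (h : ∀ n : ℕ, n * a ≤ n * b + C) : a ≤ b := by
  by_contra! hab
  obtain ⟨n, hn⟩ := exists_nat_gt (C / (a - b))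
  rw [div_lt_iff₀ (by linarith)] at hn
  have := h n
  nlinarith

/-- Choice of the number `t` of dyadic scales that corresponds to the contraction factor `ρ ^ n`. -/
lemma exists_dyadic_scale {ρ : ℝ} (h0 : 0 < ρ) (h1 : ρ < 1) (n : ℕ) :
    ∃ t : ℕ, 1 ≤ 2 ^ t * ρ ^ n ∧ 2 ^ t * ρ ^ n ≤ 2 := by
  have hp : 0 < ρ ^ n := by positivity
  obtain ⟨t, ht1, ht2⟩ := exists_nat_pow_near (x := (ρ ^ n)⁻¹) (y := (2 : ℝ))
    ((one_le_inv₀ hp).2 (pow_le_one₀ h0.le h1.le)) one_lt_two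
  refine ⟨t + 1, ?_, ?_⟩
  · rw [inv_eq_one_div, div_lt_iff₀ hp] at ht2
    exact ht2.le
  · rw [inv_eq_one_div, le_div_iff₀ hp] at ht1
    rw [pow_succ]
    linarith

lemma dyadic_scale_log {ρ : ℝ} (h0 : 0 < ρ) {n t : ℕ} (h1 : 1 ≤ 2 ^ t * ρ ^ n)
    (h2 : 2 ^ t * ρ ^ n ≤ 2) :
    n * -Real.log ρ ≤ t * Real.log 2 ∧ t * Real.log 2 ≤ n * -Real.log ρ + Real.log 2 := by
  have e : Real.log (2 ^ t * ρ ^ n) = t * Real.log 2 + n * Real.log ρ := by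
    rw [Real.log_mul (by positivity) (by positivity), Real.log_pow, Real.log_pow]
  have a := Real.log_le_log one_pos h1
  have b := Real.log_le_log (by positivity) h2
  rw [Real.log_one] at a
  constructor <;> linarith

namespace IsCoding

variable {d l : ℕ} {A : EuclideanSpace ℝ (Fin d) →L[ℝ] EuclideanSpace ℝ (Fin d)}
  {c : Fin l → EuclideanSpace ℝ (Fin d)} {π : Sig l → EuclideanSpace ℝ (Fin d)} {ρ R : ℝ}
  {μ : Measure (Sig l)} [IsProbabilityMeasure μ]

lemma cEnt_disc_shift (h : IsCoding A c π ρ R) (hμ : MeasurePreserving shift μ μ) (k n : ℕ) :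
    cEnt μ (fun x => h.disc k (shift^[n] x)) ⊥ = cEnt μ (h.disc k) ⊥ := by
  have := cEnt_comp_measurePreserving (μ := μ) bot_le (hμ.iterate n) (h.measurableSet_disc k)
  rwa [MeasurableSpace.comap_bot] at this

/-- Given the first `n` letters, the position of `π x` at scale `2 ^ (-(k + t)) ≈ ρ ^ n 2 ^ (-k)`
is determined, up to bounded ambiguity, by the position of `π (σ^n x)` at scale `2 ^ (-k)`. -/
lemma disc_add_le (h : IsCoding A c π ρ R) (hμ : MeasurePreserving shift μ μ) {n t : ℕ}
    (h2 : 2 ^ t * ρ ^ n ≤ 2) (k : ℕ) :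
    cEnt μ (h.disc (k + t)) ⊥ + cEnt μ (word n) (MeasurableSpace.comap (h.disc (k + t)) ⊤)
      ≤ cEnt μ (h.disc k) ⊥
        + cEnt μ (word n) (MeasurableSpace.comap (fun x => h.disc k (shift^[n] x)) ⊤)
        + recodeConst d := by
  have hw := measurableSet_word (l := l) n
  have r := h.recode (μ := μ) (k + t) 0
    (measurableSet_pair hw (h.measurableSet_disc_shift k n)) Prod.fst
    (fun p => (2 : ℝ) ^ (k + t) • ((A ^ n) (corner p.2) + wordTrans A c n p.1)) fun x => ?_
  · rw [cEnt_bot_pair hw (h.measurableSet_disc_shift k n), h.cEnt_disc_shift hμ] at r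
    simp only [Function.iterate_zero, id] at r
    rwa [cEnt_bot_pair hw (h.measurableSet_disc (k + t))] at r
  · rw [← smul_sub, norm_smul, Function.iterate_zero, id, h.eq_word n x, add_sub_add_right_eq_sub,
      ← map_sub, h.norm_pow]
    have hc := h.norm_sub_corner k (shift^[n] x)
    have hρ := h.pos
    calc ‖(2 : ℝ) ^ (k + t)‖ * (ρ ^ n * ‖π (shift^[n] x) - corner (h.disc k (shift^[n] x))‖)
        ≤ 2 ^ (k + t) * (ρ ^ n * (d * (2 ^ k)⁻¹)) := by
          rw [_root_.norm_pow, Real.norm_ofNat]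
          gcongr
      _ = (2 ^ t * ρ ^ n) * d := by
          rw [pow_add]
          field_simp
      _ ≤ 2 * d := by gcongr

/-- The converse of `disc_add_le`. -/
lemma le_disc_add (h : IsCoding A c π ρ R) (hμ : MeasurePreserving shift μ μ) {n t : ℕ}
    (h1 : 1 ≤ 2 ^ t * ρ ^ n) (k : ℕ) :
    cEnt μ (h.disc k) ⊥
        + cEnt μ (word n) (MeasurableSpace.comap (fun x => h.disc k (shift^[n] x)) ⊤)
      ≤ cEnt μ (h.disc (k + t)) ⊥ + cEnt μ (word n) (MeasurableSpace.comap (h.disc (k + t)) ⊤)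
        + recodeConst d := by
  obtain ⟨B, hB⟩ := h.inv_pow n
  have hw := measurableSet_word (l := l) n
  have r := h.recode (μ := μ) k n
    (measurableSet_pair hw (h.measurableSet_disc (k + t))) Prod.fst
    (fun p => (2 : ℝ) ^ k • B (corner p.2 - wordTrans A c n p.1)) fun x => ?_
  · rw [cEnt_bot_pair hw (h.measurableSet_disc (k + t))] at r
    simp only at r
    rwa [cEnt_bot_pair hw (h.measurableSet_disc_shift k n), h.cEnt_disc_shift hμ] at r
  · have hρ := h.pos
    have hBn : ∀ v, ‖B v‖ = (ρ ^ n)⁻¹ * ‖v‖ := fun v => by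
      have := h.norm_pow n (B v)
      rw [(hB v).2] at this
      rw [this]
      field_simp
    have e : π (shift^[n] x) = B (π x - wordTrans A c n (word n x)) := by
      rw [h.eq_word n x, add_sub_cancel_right, (hB _).1]
    rw [← smul_sub, norm_smul, e, ← map_sub, sub_sub_sub_cancel_right, hBn]
    have hc := h.norm_sub_corner (k + t) x
    calc ‖(2 : ℝ) ^ k‖ * ((ρ ^ n)⁻¹ * ‖π x - corner (h.disc (k + t) x)‖)
        ≤ 2 ^ k * ((ρ ^ n)⁻¹ * (d * (2 ^ (k + t))⁻¹)) := by
          rw [_root_.norm_pow, Real.norm_ofNat]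
          gcongr
      _ = (2 ^ t * ρ ^ n)⁻¹ * d := by
          rw [pow_add]
          field_simp
      _ ≤ 1 * d := by
          gcongr
          exact inv_le_one_of_one_le₀ h1
      _ ≤ 2 * d := by
          gcongr
          norm_num

/-- Refining the scale by the factor `ρ ^ n` increases the entropy of the dyadic discretization by
`n h_π(σ, μ)`, up to a bounded error, once the scale is fine enough. -/
lemma eventually_abs_le (h : IsCoding A c π ρ R) (hμ : MeasurePreserving shift μ μ) {n t : ℕ}
    (h1 : 1 ≤ 2 ^ t * ρ ^ n) (h2 : 2 ^ t * ρ ^ n ≤ 2) :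
    ∀ᶠ k in atTop, |cEnt μ (h.disc (k + t)) ⊥ - cEnt μ (h.disc k) ⊥ - n * projEntropy π μ|
      ≤ recodeConst d + 1 := by
  have t1 := (tendsto_add_atTop_iff_nat t).2 (h.tendsto_cEnt_disc (μ := μ) n)
  have t2 := h.tendsto_cEnt_disc_shift (μ := μ) n
  have t3 := t2.sub t1
  rw [h.power_rule hμ] at t3
  filter_upwards [Metric.tendsto_nhds.1 t3 1 one_pos] with k hk
  rw [Real.dist_eq] at hk
  have := h.disc_add_le hμ h2 k
  have := h.le_disc_add hμ h1 k
  rw [_root_.abs_lt] at hk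
  rw [_root_.abs_le]
  constructor <;> linarith [hk.1, hk.2]

/-- Telescoping of `eventually_abs_le` along scales in arithmetic progression. -/
lemma exists_forall_abs_le (h : IsCoding A c π ρ R) (hμ : MeasurePreserving shift μ μ) {n t : ℕ}
    (h1 : 1 ≤ 2 ^ t * ρ ^ n) (h2 : 2 ^ t * ρ ^ n ≤ 2) :
    ∃ k₀ : ℕ, ∀ j : ℕ, |cEnt μ (h.disc (k₀ + j * t)) ⊥ - cEnt μ (h.disc k₀) ⊥
      - j * (n * projEntropy π μ)| ≤ j * (recodeConst d + 1) := by
  obtain ⟨k₀, hk⟩ := eventually_atTop.1 (h.eventually_abs_le hμ h1 h2)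
  refine ⟨k₀, fun j => ?_⟩
  induction j with
  | zero =>
    have e : k₀ + 0 * t = k₀ := by omega
    rw [e]
    simp
  | succ j ih =>
    have := hk (k₀ + j * t) (by omega)
    rw [add_assoc, ← Nat.succ_mul] at this
    rw [_root_.abs_le] at this ih ⊢
    push_cast
    rw [Nat.succ_eq_add_one] at this
    constructor <;> linarith [this.1, this.2, ih.1, ih.2]

/-- If the entropy of the discretizations grows at most like `s k log 2`, then
`h_π(σ, μ) ≤ -s log ρ`. -/
lemma projEntropy_le_of (h : IsCoding A c π ρ R) (hμ : MeasurePreserving shift μ μ) {s C : ℝ}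
    (hs : 0 ≤ s) (hF : ∀ k : ℕ, cEnt μ (h.disc k) ⊥ ≤ s * Real.log 2 * k + C) :
    projEntropy π μ ≤ s * -Real.log ρ := by
  refine le_of_forall_nat_mul_le (C := recodeConst d + 1 + s * Real.log 2) fun n => ?_
  obtain ⟨t, h1, h2⟩ := exists_dyadic_scale h.pos h.lt_one n
  obtain ⟨k₀, hk⟩ := h.exists_forall_abs_le hμ h1 h2
  have key : n * projEntropy π μ ≤ recodeConst d + 1 + s * Real.log 2 * t := by
    refine le_of_forall_nat_mul_le
      (C := s * Real.log 2 * k₀ + C - cEnt μ (h.disc k₀) ⊥) fun j => ?_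
    have a := (_root_.abs_le.1 (hk j)).1
    have b := hF (k₀ + j * t)
    push_cast at b
    linarith
  have := mul_le_mul_of_nonneg_left (dyadic_scale_log h.pos h1 h2).2 hs
  linarith

/-- If the entropy of the discretizations grows at least like `s k log 2`, then
`h_π(σ, μ) ≥ -s log ρ`. -/
lemma le_projEntropy_of (h : IsCoding A c π ρ R) (hμ : MeasurePreserving shift μ μ) {s C : ℝ}
    (hs : 0 ≤ s) (hF : ∀ k : ℕ, s * Real.log 2 * k ≤ cEnt μ (h.disc k) ⊥ + C) :
    s * -Real.log ρ ≤ projEntropy π μ := by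
  refine le_of_forall_nat_mul_le (C := recodeConst d + 1) fun n => ?_
  obtain ⟨t, h1, h2⟩ := exists_dyadic_scale h.pos h.lt_one n
  obtain ⟨k₀, hk⟩ := h.exists_forall_abs_le hμ h1 h2
  have key : s * Real.log 2 * t ≤ n * projEntropy π μ + (recodeConst d + 1) := by
    refine le_of_forall_nat_mul_le
      (C := cEnt μ (h.disc k₀) ⊥ + C - s * Real.log 2 * k₀) fun j => ?_
    have a := (_root_.abs_le.1 (hk j)).2
    have b := hF (k₀ + j * t)
    push_cast at b
    linarith
  have := mul_le_mul_of_nonneg_left (dyadic_scale_log h.pos h1 h2).1 hs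
  linarith

end IsCoding

/-! ### Invariant measures carried by disjoint pieces -/

/-- The infinite concatenation of a sequence of words of length `n`. -/
def concat {n l : ℕ} (hn : 0 < n) (u : ℕ → Fin n → Fin l) : Sig l :=
  fun j => u (j / n) ⟨j % n, Nat.mod_lt _ hn⟩

lemma word_concat {n l : ℕ} (hn : 0 < n) (u : ℕ → Fin n → Fin l) : word n (concat hn u) = u 0 := by
  funext i
  simp only [word, concat, Nat.div_eq_of_lt i.2, Nat.mod_eq_of_lt i.2]

lemma shift_iterate_concat {n l : ℕ} (hn : 0 < n) (u : ℕ → Fin n → Fin l) :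
    shift^[n] (concat hn u) = concat hn fun i => u (i + 1) := by
  funext j
  simp only [shift_iterate_apply, concat, Nat.add_div_right _ hn, Nat.add_mod_right]

lemma measurable_concat {n l : ℕ} (hn : 0 < n) :
    Measurable (concat hn : (ℕ → Fin n → Fin l) → Sig l) :=
  measurable_pi_lambda _ fun j => (measurable_pi_apply _).comp (measurable_pi_apply (j / n))

/-- Bernoulli measures are invariant under the shift. -/
lemma infinitePi_map_succ {ι : Type*} [MeasurableSpace ι] (p : Measure ι) [IsProbabilityMeasure p] :
    (Measure.infinitePi fun _ : ℕ => p).map (fun u i => u (i + 1)) = Measure.infinitePi fun _ => p := by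
  refine Measure.eq_infinitePi _ fun s t ht => ?_
  have hm : Measurable fun (u : ℕ → ι) (i : ℕ) => u (i + 1) :=
    measurable_pi_lambda _ fun i => measurable_pi_apply (i + 1)
  rw [Measure.map_apply hm (MeasurableSet.pi s.countable_toSet fun i _ => ht i)]
  have : (fun (u : ℕ → ι) (i : ℕ) => u (i + 1)) ⁻¹' Set.pi s t
      = Set.pi (s.map (addRightEmbedding 1)) fun i => t (i - 1) := by
    ext u
    simp
  rw [this, Measure.infinitePi_pi _ fun i _ => ht _]
  simp

/-- The average of the first `n` images of a measure under the shift. -/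
def shiftAvg {l : ℕ} (n : ℕ) (ν : Measure (Sig l)) : Measure (Sig l) :=
  (n : ENNReal)⁻¹ • ∑ k ∈ Finset.range n, ν.map (shift^[k])

lemma isProbabilityMeasure_shiftAvg {l n : ℕ} (hn : 0 < n) (ν : Measure (Sig l))
    [IsProbabilityMeasure ν] : IsProbabilityMeasure (shiftAvg n ν) := by
  constructor
  have : ∀ k : ℕ, (ν.map (shift^[k])) univ = 1 := fun k => by
    rw [Measure.map_apply (measurable_shift.iterate k) .univ, preimage_univ, measure_univ]
  rw [shiftAvg, Measure.smul_apply, Measure.finsetSum_apply]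
  simp only [this, Finset.sum_const, Finset.card_range, nsmul_eq_mul, mul_one, smul_eq_mul]
  exact ENNReal.inv_mul_cancel (by exact_mod_cast hn.ne') (ENNReal.natCast_ne_top n)

/-- If `ν` is invariant under `σ^n`, then its average over `n` steps is invariant under `σ`. -/
lemma measurePreserving_shiftAvg {l n : ℕ} {ν : Measure (Sig l)} [IsFiniteMeasure ν]
    (hν : ν.map (shift^[n]) = ν) :
    MeasurePreserving shift (shiftAvg n ν) (shiftAvg n ν) := by
  refine ⟨measurable_shift, ?_⟩
  have e : ∀ k : ℕ, (ν.map (shift^[k])).map shift = ν.map (shift^[k + 1]) := fun k => by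
    rw [Measure.map_map measurable_shift (measurable_shift.iterate k), Function.iterate_succ']
  rw [shiftAvg, Measure.map_smul, Measure.map_finset_sum measurable_shift.aemeasurable]
  simp only [e]
  congr 1
  have h1 := Finset.sum_range_succ (fun k => ν.map (shift^[k])) n
  have h2 := Finset.sum_range_succ' (fun k => ν.map (shift^[k])) n
  rw [hν] at h1
  rw [Function.iterate_zero, Measure.map_id] at h2
  ext s hs
  have h3 := congrArg (fun m : Measure (Sig l) => m s) (h2.symm.trans h1)
  simp only [Measure.add_apply] at h3
  exact (ENNReal.add_left_inj (measure_ne_top ν s)).1 h3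

namespace IsCoding

variable {d l : ℕ} {A : EuclideanSpace ℝ (Fin d) →L[ℝ] EuclideanSpace ℝ (Fin d)}
  {c : Fin l → EuclideanSpace ℝ (Fin d)} {π : Sig l → EuclideanSpace ℝ (Fin d)} {ρ R : ℝ}

/-- The image `S_w (range π)` of the self-similar set under the composition of the maps `S_i`
along the word `w`. -/
def piece (A : EuclideanSpace ℝ (Fin d) →L[ℝ] EuclideanSpace ℝ (Fin d))
    (c : Fin l → EuclideanSpace ℝ (Fin d)) (π : Sig l → EuclideanSpace ℝ (Fin d)) {n : ℕ}
    (w : Fin n → Fin l) : Set (EuclideanSpace ℝ (Fin d)) :=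
  (fun v => (A ^ n) v + wordTrans A c n w) '' range π

lemma mem_piece (h : IsCoding A c π ρ R) (n : ℕ) (x : Sig l) : π x ∈ piece A c π (word n x) :=
  ⟨_, ⟨shift^[n] x, rfl⟩, (h.eq_word n x).symm⟩

/-- Finitely many disjoint pieces are separated by a positive distance, by compactness. -/
lemma exists_gap (h : IsCoding A c π ρ R) {n : ℕ} (W : Finset (Fin n → Fin l))
    (hW : (W : Set (Fin n → Fin l)).PairwiseDisjoint (piece A c π)) :
    ∃ Δ : ℝ, 0 < Δ ∧ ∀ w ∈ W, ∀ w' ∈ W, w ≠ w' → ∀ x ∈ piece A c π w, ∀ y ∈ piece A c π w',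
      Δ < dist x y := by
  have hc : ∀ w : Fin n → Fin l, IsCompact (piece A c π w) := fun w =>
    h.compact.image (by fun_prop)
  have key : ∀ᶠ Δ in nhdsWithin (0 : ℝ) (Ioi 0), ∀ p : (Fin n → Fin l) × (Fin n → Fin l),
      p.1 ∈ W → p.2 ∈ W → p.1 ≠ p.2 → ∀ x ∈ piece A c π p.1, ∀ y ∈ piece A c π p.2,
        Δ < dist x y := by
    refine eventually_all.2 fun p => ?_
    by_cases hp : p.1 ∈ W ∧ p.2 ∈ W ∧ p.1 ≠ p.2
    · obtain ⟨r, hr, hr'⟩ := Metric.exists_pos_forall_lt_edist (hc p.1) (hc p.2).isClosed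
        (hW hp.1 hp.2.1 hp.2.2)
      filter_upwards [Ioo_mem_nhdsGT (show (0 : ℝ) < r from hr)] with Δ hΔ _ _ _ x hx y hy
      have := hr' x hx y hy
      rw [edist_nndist] at this
      have h3 : r < nndist x y := by exact_mod_cast this
      exact hΔ.2.trans (by exact_mod_cast h3)
    · exact Eventually.of_forall fun Δ h1 h2 h3 => (hp ⟨h1, h2, h3⟩).elim
  obtain ⟨Δ, h1, h2⟩ := (key.and self_mem_nhdsWithin).exists
  exact ⟨Δ, h2, fun w hw w' hw' hne => h1 (w, w') hw hw' hne⟩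

/-- Codes whose blocks come from a family of separated words are determined up to block `j` by
their image up to distance `Δ ρ ^ (n j)`. -/
lemma concat_eq_of_dist_le (h : IsCoding A c π ρ R) {n : ℕ} (hn : 0 < n)
    {W : Finset (Fin n → Fin l)} {Δ : ℝ} (hΔ0 : 0 < Δ)
    (hΔ : ∀ w ∈ W, ∀ w' ∈ W, w ≠ w' → ∀ x ∈ piece A c π w, ∀ y ∈ piece A c π w', Δ < dist x y)
    (j : ℕ) : ∀ u v : ℕ → Fin n → Fin l, (∀ i, u i ∈ W) → (∀ i, v i ∈ W) →
      dist (π (concat hn u)) (π (concat hn v)) ≤ Δ * (ρ ^ n) ^ j →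
      ∀ i ≤ j, u i = v i := by
  have hρ := h.pos
  have h0 : ∀ u v : ℕ → Fin n → Fin l, (∀ i, u i ∈ W) → (∀ i, v i ∈ W) →
      dist (π (concat hn u)) (π (concat hn v)) ≤ Δ → u 0 = v 0 := by
    intro u v hu hv huv
    by_contra hne
    have := hΔ _ (hu 0) _ (hv 0) hne (π (concat hn u)) (word_concat hn u ▸ h.mem_piece n _)
      (π (concat hn v)) (word_concat hn v ▸ h.mem_piece n _)
    linarith
  induction j with
  | zero =>
    intro u v hu hv huv i hi
    obtain rfl : i = 0 := by omega
    exact h0 u v hu hv (by simpa using huv)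
  | succ j ih =>
    intro u v hu hv huv i hi
    have e : u 0 = v 0 := h0 u v hu hv (huv.trans (mul_le_of_le_one_right hΔ0.le
      (pow_le_one₀ (by positivity) (pow_le_one₀ hρ.le h.lt_one.le))))
    rcases i with _ | i
    · exact e
    · refine ih (fun i => u (i + 1)) (fun i => v (i + 1)) (fun i => hu _) (fun i => hv _) ?_ i
        (by omega)
      rw [h.eq_word n (concat hn u), h.eq_word n (concat hn v), word_concat, word_concat, e,
        dist_add_right, dist_eq_norm, ← map_sub, h.norm_pow, shift_iterate_concat,
        shift_iterate_concat, ← dist_eq_norm, pow_succ] at huv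
      have : 0 < ρ ^ n := by positivity
      exact le_of_mul_le_mul_left (by linarith) this

/-- The Bernoulli measure giving equal weight to all sequences of blocks from `W`. -/
def blockMeasure {n : ℕ} (hn : 0 < n) (W : Finset (Fin n → Fin l)) [Nonempty W] :
    Measure (Sig l) :=
  (Measure.infinitePi fun _ : ℕ => (PMF.uniformOfFintype W).toMeasure).map
    fun u => concat hn fun i => (u i : Fin n → Fin l)

lemma measurable_concat_val {n : ℕ} (hn : 0 < n) (W : Finset (Fin n → Fin l)) :
    Measurable fun u : ℕ → W => concat hn fun i => (u i : Fin n → Fin l) :=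
  (measurable_concat hn).comp
    (measurable_pi_lambda _ fun i => (measurable_pi_apply i).subtype_val)

instance {n : ℕ} (hn : 0 < n) (W : Finset (Fin n → Fin l)) [Nonempty W] :
    IsProbabilityMeasure (blockMeasure hn W) :=
  Measure.isProbabilityMeasure_map (measurable_concat_val hn W).aemeasurable

lemma blockMeasure_map {n : ℕ} (hn : 0 < n) (W : Finset (Fin n → Fin l)) [Nonempty W] :
    (blockMeasure hn W).map (shift^[n]) = blockMeasure hn W := by
  have hs : Measurable fun (u : ℕ → W) (i : ℕ) => u (i + 1) :=
    measurable_pi_lambda _ fun i => measurable_pi_apply (i + 1)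
  rw [blockMeasure, Measure.map_map (measurable_shift.iterate n) (measurable_concat_val hn W)]
  conv_rhs => rw [← infinitePi_map_succ, Measure.map_map (measurable_concat_val hn W) hs]
  congr 1
  funext u
  exact shift_iterate_concat hn _

/-- A set of diameter at most `Δ ρ ^ (n j)` meets only codes with the same first `j + 1` blocks. -/
lemma blockMeasure_le (h : IsCoding A c π ρ R) {n : ℕ} (hn : 0 < n) {W : Finset (Fin n → Fin l)}
    [Nonempty W] {Δ : ℝ} (hΔ0 : 0 < Δ)
    (hΔ : ∀ w ∈ W, ∀ w' ∈ W, w ≠ w' → ∀ x ∈ piece A c π w, ∀ y ∈ piece A c π w', Δ < dist x y)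
    (j : ℕ) {B : Set (EuclideanSpace ℝ (Fin d))} (hBm : MeasurableSet B)
    (hB : ∀ x ∈ B, ∀ y ∈ B, dist x y ≤ Δ * (ρ ^ n) ^ j) :
    blockMeasure hn W (π ⁻¹' B) ≤ ((W.card : ENNReal)⁻¹) ^ (j + 1) := by
  rw [blockMeasure, Measure.map_apply (measurable_concat_val hn W) (h.meas hBm)]
  by_cases hne : ∃ v : ℕ → W, π (concat hn fun i => (v i : Fin n → Fin l)) ∈ B
  · obtain ⟨v, hv⟩ := hne
    calc _ ≤ Measure.infinitePi (fun _ : ℕ => (PMF.uniformOfFintype W).toMeasure)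
          (Set.pi (Finset.range (j + 1)) fun i => {v i}) := by
          refine measure_mono fun u hu i hi => ?_
          exact Subtype.ext (h.concat_eq_of_dist_le hn hΔ0 hΔ j _ _ (fun i => (u i).2)
            (fun i => (v i).2) (hB _ hu _ hv) i (by simpa [Nat.lt_succ_iff] using hi))
      _ = ((W.card : ENNReal)⁻¹) ^ (j + 1) := by
          rw [Measure.infinitePi_pi _ fun i _ => measurableSet_singleton _]
          simp
  · have : (fun u : ℕ → W => concat hn fun i => (u i : Fin n → Fin l)) ⁻¹' (π ⁻¹' B) = ∅ :=
      eq_empty_of_forall_notMem fun u hu => hne ⟨u, hu⟩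
    rw [this, measure_empty]
    exact zero_le

/-- Passing to the image under `σ^k` preserves upper bounds for the mass of small sets up to a
constant, because the preimage of a set is covered by its `l ^ k` contracted copies. -/
lemma measure_shift_le (h : IsCoding A c π ρ R) {ν : Measure (Sig l)} {r : ℝ} {q : ENNReal}
    (hν : ∀ B : Set (EuclideanSpace ℝ (Fin d)), MeasurableSet B → (∀ x ∈ B, ∀ y ∈ B, dist x y ≤ r) →
      ν (π ⁻¹' B) ≤ q) (k : ℕ) {B : Set (EuclideanSpace ℝ (Fin d))} (hBm : MeasurableSet B)
    (hB : ∀ x ∈ B, ∀ y ∈ B, dist x y ≤ r) :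
    ν.map (shift^[k]) (π ⁻¹' B) ≤ (l : ENNReal) ^ k * q := by
  obtain ⟨C, hC⟩ := h.inv_pow k
  have hρ := h.pos
  rw [Measure.map_apply (measurable_shift.iterate k) (h.meas hBm)]
  -- `σ^k x` lies over `B` exactly when `x` lies over `S_w B`, with `w` the first `k` letters.
  let B' : (Fin k → Fin l) → Set (EuclideanSpace ℝ (Fin d)) := fun w =>
    (fun v => C (v - wordTrans A c k w)) ⁻¹' B
  have hsub : (shift^[k]) ⁻¹' (π ⁻¹' B) ⊆ ⋃ w, π ⁻¹' B' w := by
    intro x hx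
    refine mem_iUnion.2 ⟨word k x, ?_⟩
    change C (π x - wordTrans A c k (word k x)) ∈ B
    rwa [h.eq_word k x, add_sub_cancel_right, (hC _).1]
  calc _ ≤ ν (⋃ w, π ⁻¹' B' w) := measure_mono hsub
    _ ≤ ∑ w, ν (π ⁻¹' B' w) := measure_iUnion_fintype_le _ _
    _ ≤ ∑ _w : Fin k → Fin l, q := by
        refine Finset.sum_le_sum fun w _ => hν _ (hBm.preimage (by fun_prop)) fun x hx y hy => ?_
        have e : dist x y = ρ ^ k * dist (C (x - wordTrans A c k w)) (C (y - wordTrans A c k w)) := by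
          rw [dist_eq_norm (C _), ← map_sub, ← h.norm_pow, (hC _).2, sub_sub_sub_cancel_right,
            dist_eq_norm]
        rw [e]
        exact (mul_le_of_le_one_left dist_nonneg (pow_le_one₀ hρ.le h.lt_one.le)).trans
          (hB _ hx _ hy)
    _ = (l : ENNReal) ^ k * q := by simp

/-- A family `W` of words of length `n` with disjoint images and at least `ρ ^ (-n s)` elements
yields an invariant measure whose projection satisfies the Frostman condition of order `s`. -/
lemma exists_frostman (h : IsCoding A c π ρ R) {n : ℕ} (hn : 0 < n) (W : Finset (Fin n → Fin l))
    (hW : (W : Set (Fin n → Fin l)).PairwiseDisjoint (piece A c π)) {s : ℝ} (hs : 0 < s)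
    (hcard : 1 ≤ W.card * (ρ ^ n) ^ s) :
    ∃ μ : Measure (Sig l), IsProbabilityMeasure μ ∧ MeasurePreserving shift μ μ ∧ ∃ C : ℝ, 0 < C ∧
      ∀ B : Set (EuclideanSpace ℝ (Fin d)), MeasurableSet B → ∀ e : ℝ, 0 < e →
        (∀ x ∈ B, ∀ y ∈ B, dist x y ≤ e) → μ (π ⁻¹' B) ≤ ENNReal.ofReal (C * e ^ s) := by
  have hρ := h.pos
  set r := ρ ^ n with hr
  have hr0 : 0 < r := by positivity
  have hr1 : r < 1 := pow_lt_one₀ hρ.le h.lt_one hn.ne'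
  have hN : 0 < W.card := by
    rcases Nat.eq_zero_or_pos W.card with h0 | h0
    · rw [h0] at hcard; norm_num at hcard
    · exact h0
  have : Nonempty W := (Finset.card_pos.1 hN).to_subtype
  obtain ⟨Δ, hΔ0, hΔ⟩ := h.exists_gap W hW
  set M : ℝ := ∑ k ∈ Finset.range n, (l : ℝ) ^ k with hM
  have hM0 : 0 ≤ M := by positivity
  have hprob := isProbabilityMeasure_shiftAvg hn (blockMeasure hn W)
  have hNr : (W.card : ℝ)⁻¹ ≤ r ^ s := by
    rw [inv_eq_one_div, div_le_iff₀ (by exact_mod_cast hN)]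
    linarith
  have hμ : ∀ j : ℕ, ∀ B : Set (EuclideanSpace ℝ (Fin d)), MeasurableSet B →
      (∀ x ∈ B, ∀ y ∈ B, dist x y ≤ Δ * r ^ j) →
      shiftAvg n (blockMeasure hn W) (π ⁻¹' B) ≤ ENNReal.ofReal (M * (r ^ s) ^ (j + 1)) := by
    intro j B hBm hB
    rw [shiftAvg, Measure.smul_apply, Measure.finsetSum_apply, smul_eq_mul]
    calc _ ≤ 1 * ∑ k ∈ Finset.range n, (l : ENNReal) ^ k * ((W.card : ENNReal)⁻¹) ^ (j + 1) := by
          refine mul_le_mul' (ENNReal.inv_le_one.2 (by exact_mod_cast hn))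
            (Finset.sum_le_sum fun k _ => ?_)
          exact h.measure_shift_le (fun B hBm hB => h.blockMeasure_le hn hΔ0 hΔ j hBm hB) k hBm hB
      _ = ENNReal.ofReal (M * ((W.card : ℝ)⁻¹) ^ (j + 1)) := by
          rw [one_mul, ← Finset.sum_mul, ENNReal.ofReal_mul hM0, hM,
            ENNReal.ofReal_sum_of_nonneg (fun _ _ => by positivity),
            ENNReal.ofReal_pow (by positivity),
            ENNReal.ofReal_inv_of_pos (by exact_mod_cast hN), ENNReal.ofReal_natCast]
          simp [ENNReal.ofReal_pow]
      _ ≤ _ := by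
          gcongr
  refine ⟨_, hprob, measurePreserving_shiftAvg (blockMeasure_map hn W), (M + 1) * (Δ⁻¹) ^ s,
    by positivity, fun B hBm e he hB => ?_⟩
  rw [mul_assoc, ← Real.mul_rpow (by positivity) he.le]
  rcases le_total e Δ with hle | hle
  · have hx : 0 < Δ⁻¹ * e := by positivity
    obtain ⟨j, hj1, hj2⟩ := exists_nat_pow_near_of_lt_one hx
      (by rw [inv_mul_le_iff₀ hΔ0]; linarith) hr0 hr1
    refine (hμ j B hBm fun x hx y hy => (hB x hx y hy).trans ?_).trans
      (ENNReal.ofReal_le_ofReal ?_)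
    · rwa [inv_mul_le_iff₀ hΔ0] at hj2
    · rw [← Real.rpow_mul_natCast hr0.le, mul_comm s, Real.rpow_natCast_mul hr0.le]
      have := Real.rpow_le_rpow (by positivity) hj1.le hs.le
      gcongr
      linarith
  · refine prob_le_one.trans ?_
    rw [← ENNReal.ofReal_one]
    refine ENNReal.ofReal_le_ofReal (one_le_mul_of_one_le_of_one_le (by linarith) ?_)
    exact Real.one_le_rpow (by rw [le_inv_mul_iff₀ hΔ0]; linarith) hs.le

end IsCoding

/-! ### Consequences of the Frostman condition and of coverings -/

namespace IsCoding

variable {d l : ℕ} {A : EuclideanSpace ℝ (Fin d) →L[ℝ] EuclideanSpace ℝ (Fin d)}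
  {c : Fin l → EuclideanSpace ℝ (Fin d)} {π : Sig l → EuclideanSpace ℝ (Fin d)} {ρ R : ℝ}

/-- The mass distribution principle. -/
lemma le_dimH_of_frostman (h : IsCoding A c π ρ R) {μ : Measure (Sig l)} [IsProbabilityMeasure μ]
    {s C : ℝ} (hs : 0 < s) (hC : 0 < C)
    (hμ : ∀ B : Set (EuclideanSpace ℝ (Fin d)), MeasurableSet B → ∀ e : ℝ, 0 < e →
        (∀ x ∈ B, ∀ y ∈ B, dist x y ≤ e) → μ (π ⁻¹' B) ≤ ENNReal.ofReal (C * e ^ s)) :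
    ENNReal.ofReal s ≤ dimH (range π) := by
  have key : (ENNReal.ofReal C)⁻¹ • μ.map π ≤ Measure.hausdorffMeasure s := by
    refine Measure.le_hausdorffMeasure s _ 1 one_pos fun B hB => ?_
    have hB1 : Bornology.IsBounded (closure B) :=
      (Metric.isBounded_iff_ediam_ne_top.2 (ne_top_of_le_ne_top ENNReal.one_ne_top hB)).closure
    have hd : ∀ x ∈ closure B, ∀ y ∈ closure B, dist x y ≤ Metric.diam (closure B) :=
      fun x hx y hy => Metric.dist_le_diam_of_mem hB1 hx hy
    have hle : μ (π ⁻¹' closure B) ≤ ENNReal.ofReal (C * Metric.diam (closure B) ^ s) := by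
      have ht : Tendsto (fun e : ℝ => ENNReal.ofReal (C * e ^ s))
          (nhdsWithin (Metric.diam (closure B)) (Ioi (Metric.diam (closure B))))
          (nhds (ENNReal.ofReal (C * Metric.diam (closure B) ^ s))) := by
        refine (ENNReal.continuous_ofReal.tendsto _).comp (Tendsto.const_mul _ ?_)
        exact ((Real.continuous_rpow_const hs.le).tendsto _).mono_left nhdsWithin_le_nhds
      refine ge_of_tendsto ht ?_
      filter_upwards [self_mem_nhdsWithin] with e he
      exact hμ _ isClosed_closure.measurableSet e (Metric.diam_nonneg.trans_lt he)
        fun x hx y hy => (hd x hx y hy).trans (le_of_lt he)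
    calc ((ENNReal.ofReal C)⁻¹ • μ.map π) B ≤ ((ENNReal.ofReal C)⁻¹ • μ.map π) (closure B) :=
          measure_mono subset_closure
      _ = (ENNReal.ofReal C)⁻¹ * μ (π ⁻¹' closure B) := by
          rw [Measure.smul_apply, Measure.map_apply h.meas isClosed_closure.measurableSet,
            smul_eq_mul]
      _ ≤ (ENNReal.ofReal C)⁻¹ * ENNReal.ofReal (C * Metric.diam (closure B) ^ s) := by gcongr
      _ = Metric.ediam B ^ s := by
          rw [ENNReal.ofReal_mul hC.le, ← mul_assoc, ENNReal.inv_mul_cancel (by simpa using hC)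
            ENNReal.ofReal_ne_top, one_mul, ← ENNReal.ofReal_rpow_of_nonneg Metric.diam_nonneg hs.le,
            Metric.diam, ENNReal.ofReal_toReal hB1.ediam_ne_top, Metric.ediam_closure]
  have hpos : Measure.hausdorffMeasure s (range π) ≠ 0 := by
    refine ((?_ : 0 < ((ENNReal.ofReal C)⁻¹ • μ.map π) (range π)).trans_le (key _)).ne'
    rw [Measure.smul_apply, Measure.map_apply h.meas h.compact.isClosed.measurableSet,
      preimage_range, measure_univ]
    simp
  have := le_dimH_of_hausdorffMeasure_ne_zero (d := s.toNNReal) (s := range π)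
  rw [Real.coe_toNNReal s hs.le] at this
  exact this hpos

/-- A measure satisfying the Frostman condition of order `s` has projection entropy at least
`-s log ρ`. -/
lemma le_projEntropy_of_frostman (h : IsCoding A c π ρ R) {μ : Measure (Sig l)}
    [IsProbabilityMeasure μ] (hinv : MeasurePreserving shift μ μ) {s C : ℝ} (hs : 0 < s) (hC : 0 < C)
    (hμ : ∀ B : Set (EuclideanSpace ℝ (Fin d)), MeasurableSet B → ∀ e : ℝ, 0 < e →
        (∀ x ∈ B, ∀ y ∈ B, dist x y ≤ e) → μ (π ⁻¹' B) ≤ ENNReal.ofReal (C * e ^ s)) :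
    s * -Real.log ρ ≤ projEntropy π μ := by
  have hD : (0 : ℝ) < 2 * d + 1 := by positivity
  refine h.le_projEntropy_of hinv (C := Real.log (C * (2 * d + 1) ^ s)) hs.le fun k => ?_
  set q : ℝ := C * ((2 * d + 1) * (2 ^ k)⁻¹) ^ s with hq
  have hq0 : 0 < q := by positivity
  have hlogq : Real.log q = Real.log (C * (2 * d + 1) ^ s) - s * Real.log 2 * k := by
    rw [hq, Real.log_mul hC.ne' (by positivity), Real.log_rpow (by positivity),
      Real.log_mul hD.ne' (by positivity), Real.log_inv, Real.log_pow,
      Real.log_mul hC.ne' (by positivity), Real.log_rpow hD]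
    ring
  have hp : ∀ b, μ.real (h.disc k ⁻¹' {b}) ≤ q := by
    intro b
    have hsub : h.disc k ⁻¹' {b} ⊆ π ⁻¹' Metric.closedBall (corner b) (d * (2 ^ k)⁻¹) := by
      rintro x rfl
      rw [mem_preimage, mem_closedBall_iff_norm]
      exact h.norm_sub_corner k x
    refine ENNReal.toReal_le_of_le_ofReal hq0.le ((measure_mono hsub).trans
      (hμ _ Metric.isClosed_closedBall.measurableSet _ (by positivity) fun x hx y hy => ?_))
    have := dist_triangle_right x y (corner b)
    have h1 := Metric.mem_closedBall.1 hx
    have h2 := Metric.mem_closedBall.1 hy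
    have h3 : (0 : ℝ) < (2 ^ k)⁻¹ := by positivity
    linarith
  rw [cEnt_bot (h.measurableSet_disc k)]
  have hsum : ∑ b, μ.real (h.disc k ⁻¹' {b}) = 1 := by
    rw [sum_measureReal_preimage_singleton _ fun b _ => h.measurableSet_disc k b]
    simp
  have : ∑ b, μ.real (h.disc k ⁻¹' {b}) * -Real.log q
      ≤ ∑ b, Real.negMulLog (μ.real (h.disc k ⁻¹' {b})) := by
    refine Finset.sum_le_sum fun b _ => ?_
    rcases (measureReal_nonneg (μ := μ) (s := h.disc k ⁻¹' {b})).eq_or_lt with h0 | h0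
    · simp [← h0]
    · rw [Real.negMulLog]
      have := Real.log_le_log h0 (hp b)
      nlinarith
  rw [← Finset.sum_mul, hsum, hlogq] at this
  linarith

/-- A maximal family of words of length `n` with disjoint images provides a covering of the
self-similar set by balls of radius comparable to `ρ ^ n`. -/
lemma exists_cover (h : IsCoding A c π ρ R) {n : ℕ} {s : ℝ}
    (hW : ∀ W : Finset (Fin n → Fin l), (W : Set (Fin n → Fin l)).PairwiseDisjoint (piece A c π) →
      W.card * (ρ ^ n) ^ s < 1) :
    ∃ T : Finset (EuclideanSpace ℝ (Fin d)), T.card * (ρ ^ n) ^ s ≤ 1 ∧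
      ∀ x, ∃ t ∈ T, ‖π x - t‖ ≤ 3 * R * ρ ^ n := by
  classical
  have hρ := h.pos
  obtain ⟨W, hWd, hmax⟩ := (Set.toFinite {W : Finset (Fin n → Fin l) |
    (W : Set (Fin n → Fin l)).PairwiseDisjoint (piece A c π)}).exists_maximal ⟨∅, by simp⟩
  refine ⟨W.image (wordTrans A c n), ?_, fun x => ?_⟩
  · refine le_trans ?_ (hW W hWd).le
    gcongr
    exact Finset.card_image_le
  · have hx : ∃ w ∈ W, ¬ Disjoint (piece A c π (word n x)) (piece A c π w) := by
      by_cases hxW : word n x ∈ W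
      · exact ⟨_, hxW, fun hd => Set.disjoint_left.1 hd (h.mem_piece n x) (h.mem_piece n x)⟩
      · by_contra! hd
        have hins : ((insert (word n x) W : Finset (Fin n → Fin l)) :
            Set (Fin n → Fin l)).PairwiseDisjoint (piece A c π) := by
          rw [Finset.coe_insert, Set.pairwiseDisjoint_insert_of_notMem (by simpa using hxW)]
          exact ⟨hWd, fun w hw => hd w hw⟩
        exact hxW (hmax hins (Finset.subset_insert _ _) (Finset.mem_insert_self _ _))
    obtain ⟨w, hw, hd⟩ := hx
    obtain ⟨y, hy1, hy2⟩ := Set.not_disjoint_iff.1 hd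
    have hp : ∀ (w : Fin n → Fin l), ∀ y ∈ piece A c π w, ‖y - wordTrans A c n w‖ ≤ R * ρ ^ n := by
      rintro w _ ⟨_, ⟨z, rfl⟩, rfl⟩
      rw [add_sub_cancel_right, h.norm_pow, mul_comm]
      gcongr
      exact h.bdd z
    refine ⟨_, Finset.mem_image_of_mem _ hw, ?_⟩
    have e : π x - wordTrans A c n w = (π x - wordTrans A c n (word n x))
        - (y - wordTrans A c n (word n x)) + (y - wordTrans A c n w) := by abel
    rw [e]
    have := norm_add_le ((π x - wordTrans A c n (word n x)) - (y - wordTrans A c n (word n x)))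
      (y - wordTrans A c n w)
    have := norm_sub_le (π x - wordTrans A c n (word n x)) (y - wordTrans A c n (word n x))
    have := hp _ _ (h.mem_piece n x)
    have := hp _ _ hy1
    have := hp _ _ hy2
    linarith

/-- Coverings by at most `ρ ^ (-n s)` balls of radius comparable to `ρ ^ n` keep the `s`-dimensional
Hausdorff measure finite. -/
lemma dimH_le_of_cover (h : IsCoding A c π ρ R) (hR : 0 ≤ R) {s : ℝ} (hs : 0 < s)
    (hT : ∀ n : ℕ, ∃ T : Finset (EuclideanSpace ℝ (Fin d)), T.card * (ρ ^ (n + 1)) ^ s ≤ 1 ∧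
      ∀ x, ∃ t ∈ T, ‖π x - t‖ ≤ 3 * R * ρ ^ (n + 1)) :
    dimH (range π) ≤ ENNReal.ofReal s := by
  have hρ := h.pos
  choose T hT1 hT2 using hT
  have hdiam : ∀ (n : ℕ) (i : T n), Metric.ediam (Metric.closedBall (i : EuclideanSpace ℝ (Fin d))
      (3 * R * ρ ^ (n + 1))) ≤ ENNReal.ofReal (6 * R * ρ ^ (n + 1)) := fun n i => by
    refine Metric.ediam_le fun x hx y hy => ?_
    rw [edist_dist]
    refine ENNReal.ofReal_le_ofReal ?_
    have := dist_triangle_right x y i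
    have h1 := Metric.mem_closedBall.1 hx
    have h2 := Metric.mem_closedBall.1 hy
    linarith
  have hr : Tendsto (fun n : ℕ => ENNReal.ofReal (6 * R * ρ ^ (n + 1))) atTop (nhds 0) := by
    have h1 := ((tendsto_add_atTop_iff_nat 1).2
      (tendsto_pow_atTop_nhds_zero_of_lt_one hρ.le h.lt_one)).const_mul (6 * R)
    have h2 := (ENNReal.continuous_ofReal.tendsto _).comp h1
    rw [mul_zero, ENNReal.ofReal_zero] at h2
    exact h2
  have key := Measure.hausdorffMeasure_le_liminf_sum s (range π) _ hr
    (fun n (i : T n) => Metric.closedBall (i : EuclideanSpace ℝ (Fin d)) (3 * R * ρ ^ (n + 1)))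
    (Eventually.of_forall hdiam) (Eventually.of_forall fun n => by
      rintro _ ⟨x, rfl⟩
      obtain ⟨t, ht, hx⟩ := hT2 n x
      exact mem_iUnion.2 ⟨⟨t, ht⟩, mem_closedBall_iff_norm.2 hx⟩)
  have hfin : Measure.hausdorffMeasure s (range π) ≤ ENNReal.ofReal ((6 * R) ^ s) := by
    refine key.trans (liminf_le_of_frequently_le' (Frequently.of_forall fun n => ?_))
    calc _ ≤ ∑ _i : T n, ENNReal.ofReal (6 * R * ρ ^ (n + 1)) ^ s :=
          Finset.sum_le_sum fun i _ => ENNReal.rpow_le_rpow (hdiam n i) hs.le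
      _ = ENNReal.ofReal ((T n).card * (6 * R * ρ ^ (n + 1)) ^ s) := by
          rw [ENNReal.ofReal_mul (p := ((T n).card : ℝ)) (by positivity), ENNReal.ofReal_natCast,
            ← ENNReal.ofReal_rpow_of_nonneg (by positivity) hs.le]
          simp
      _ ≤ ENNReal.ofReal ((6 * R) ^ s) := by
          refine ENNReal.ofReal_le_ofReal ?_
          rw [Real.mul_rpow (by positivity) (by positivity), mul_left_comm]
          exact mul_le_of_le_one_right (by positivity) (hT1 n)
  have := dimH_le_of_hausdorffMeasure_ne_top (d := s.toNNReal) (s := range π)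
  rw [Real.coe_toNNReal s hs.le] at this
  exact this (ne_top_of_le_ne_top ENNReal.ofReal_ne_top hfin)

/-- Coverings by at most `ρ ^ (-n s)` balls of radius comparable to `ρ ^ n` bound the number of dyadic
cubes met at scale `2 ^ (-k)` by a multiple of `2 ^ (k s)`, hence the entropy of the discretizations. -/
lemma projEntropy_le_of_cover (h : IsCoding A c π ρ R) (hR : 0 ≤ R) {s : ℝ} (hs : 0 < s)
    (hT : ∀ n : ℕ, ∃ T : Finset (EuclideanSpace ℝ (Fin d)), T.card * (ρ ^ (n + 1)) ^ s ≤ 1 ∧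
      ∀ x, ∃ t ∈ T, ‖π x - t‖ ≤ 3 * R * ρ ^ (n + 1))
    {μ : Measure (Sig l)} [IsProbabilityMeasure μ] (hinv : MeasurePreserving shift μ μ) :
    projEntropy π μ ≤ s * -Real.log ρ := by
  classical
  have hρ := h.pos
  have hL : 0 < -Real.log ρ := neg_pos.2 (Real.log_neg hρ h.lt_one)
  set J := Icc (-(⌈3 * R⌉ + 1) : ℤ) (⌈3 * R⌉ + 1)
  refine h.projEntropy_le_of hinv (C := s * -Real.log ρ + Real.log (Fintype.card (Fin d → J))) hs.le
    fun k => ?_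
  obtain ⟨n, hn1, hn2⟩ := exists_nat_pow_near_of_lt_one (x := ((2 : ℝ) ^ k)⁻¹) (by positivity)
    (inv_le_one_of_one_le₀ (one_le_pow₀ one_le_two)) hρ h.lt_one
  obtain ⟨T, hT1, hT2⟩ := hT n
  have hcode : ∀ x, ∃ p : T × (Fin d → J), ∀ i,
      ⌊2 ^ k * π x i⌋ = ⌊2 ^ k * (p.1 : EuclideanSpace ℝ (Fin d)) i⌋ + p.2 i := by
    intro x
    obtain ⟨t, ht, hx⟩ := hT2 x
    have hmem : ∀ i, ⌊2 ^ k * π x i⌋ - ⌊2 ^ k * t i⌋ ∈ J := by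
      intro i
      have h1 := (PiLp.norm_apply_le _ i).trans hx
      rw [PiLp.sub_apply, Real.norm_eq_abs] at h1
      have h2 : |2 ^ k * π x i - 2 ^ k * t i| ≤ 3 * R := by
        rw [← mul_sub, abs_mul, abs_of_pos (by positivity)]
        calc (2 : ℝ) ^ k * |π x i - t i| ≤ 2 ^ k * (3 * R * (2 ^ k)⁻¹) := by
              gcongr
              exact h1.trans (by gcongr)
          _ = 3 * R := by field_simp
      obtain ⟨h3, h4⟩ := _root_.abs_le.1 h2
      have f0 := Int.le_ceil (3 * R)
      have f1 := Int.floor_le (2 ^ k * π x i)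
      have f2 := Int.lt_floor_add_one (2 ^ k * π x i)
      have f3 := Int.floor_le (2 ^ k * t i)
      have f4 := Int.lt_floor_add_one (2 ^ k * t i)
      constructor
      · have : ((-(⌈3 * R⌉ + 1) - 1 : ℤ) : ℝ) < ((⌊2 ^ k * π x i⌋ - ⌊2 ^ k * t i⌋ : ℤ) : ℝ) := by
          push_cast
          linarith
        have := Int.cast_lt.1 this
        omega
      · have : ((⌊2 ^ k * π x i⌋ - ⌊2 ^ k * t i⌋ : ℤ) : ℝ) < (((⌈3 * R⌉ + 1) + 1 : ℤ) : ℝ) := by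
          push_cast
          linarith
        have := Int.cast_lt.1 this
        omega
    exact ⟨(⟨t, ht⟩, fun i => ⟨_, hmem i⟩), fun i => by simp⟩
  choose p hp using hcode
  set D : Finset (Cell d R k) := Finset.univ.filter fun b => ∃ x, h.disc k x = b with hD
  have hDmem : ∀ x, h.disc k x ∈ D := fun x => by simp [hD]
  have hx : ∀ b : D, ∃ x, h.disc k x = b := fun b => (Finset.mem_filter.1 b.2).2
  choose z hz using hx
  have hcard : D.card ≤ T.card * Fintype.card (Fin d → J) := by
    have := Fintype.card_le_of_injective (fun b : D => p (z b)) fun b b' hbb => by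
      simp only at hbb
      refine Subtype.ext ?_
      rw [← hz b, ← hz b', h.disc_eq_iff]
      intro i
      rw [hp, hp, hbb]
    simpa using this
  have hne := nonempty_of_isProbabilityMeasure μ
  obtain ⟨x₀⟩ := hne
  have hD0 : (0 : ℝ) < D.card := by exact_mod_cast Finset.card_pos.2 ⟨_, hDmem x₀⟩
  have hcard' : (D.card : ℝ) ≤ T.card * Fintype.card (Fin d → J) := by exact_mod_cast hcard
  have hT0 : (0 : ℝ) < T.card := by
    obtain ⟨t, ht, -⟩ := hT2 x₀
    exact_mod_cast Finset.card_pos.2 ⟨t, ht⟩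
  have hJ0 : (0 : ℝ) < Fintype.card (Fin d → J) := by
    exact_mod_cast Fintype.card_pos_iff.2 ⟨(p x₀).2⟩
  have h1 := cEnt_le_log_card (μ := μ) bot_le (h.measurableSet_disc k) D hDmem
  have h2 := Real.log_le_log hD0 hcard'
  rw [Real.log_mul hT0.ne' hJ0.ne'] at h2
  have h3 := Real.log_le_log (by positivity) hT1
  rw [Real.log_mul hT0.ne' (by positivity), Real.log_rpow (by positivity), Real.log_pow,
    Real.log_one] at h3
  have h4 := Real.log_le_log (by positivity) hn2
  rw [Real.log_inv, Real.log_pow, Real.log_pow] at h4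
  have h5 := mul_le_mul_of_nonneg_left h4 hs.le
  push_cast at h3
  linarith

end IsCoding

/-! ### The dichotomy, and the coding map of the attractor -/

/-- Either some family of disjoint pieces of one level is rich enough to carry an invariant measure
of dimension at least `s`, or no such family exists and maximal ones give economical coverings. -/
lemma IsCoding.dichotomy {d l : ℕ} {A : EuclideanSpace ℝ (Fin d) →L[ℝ] EuclideanSpace ℝ (Fin d)}
    {c : Fin l → EuclideanSpace ℝ (Fin d)} {π : Sig l → EuclideanSpace ℝ (Fin d)} {ρ R : ℝ}
    (h : IsCoding A c π ρ R) (hR : 0 ≤ R) {s : ℝ} (hs : 0 < s) :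
    (ENNReal.ofReal s ≤ dimH (range π) ∧ ∃ μ : Measure (Sig l), IsProbabilityMeasure μ ∧
      MeasurePreserving shift μ μ ∧ s * -Real.log ρ ≤ projEntropy π μ) ∨
    (dimH (range π) ≤ ENNReal.ofReal s ∧ ∀ μ : Measure (Sig l), IsProbabilityMeasure μ →
      MeasurePreserving shift μ μ → projEntropy π μ ≤ s * -Real.log ρ) := by
  by_cases hW : ∃ n : ℕ, ∃ W : Finset (Fin (n + 1) → Fin l),
      (W : Set (Fin (n + 1) → Fin l)).PairwiseDisjoint (piece A c π) ∧
        1 ≤ W.card * (ρ ^ (n + 1)) ^ s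
  · obtain ⟨n, W, hd, hc⟩ := hW
    obtain ⟨μ, hμ, hinv, C, hC, hF⟩ := h.exists_frostman n.succ_pos W hd hs hc
    exact Or.inl ⟨h.le_dimH_of_frostman hs hC hF, μ, hμ, hinv,
      h.le_projEntropy_of_frostman hinv hs hC hF⟩
  · push Not at hW
    have hT := fun n => h.exists_cover (hW n)
    exact Or.inr ⟨h.dimH_le_of_cover hR hs hT,
      fun μ _ hinv => h.projEntropy_le_of_cover hR hs hT hinv⟩

/-- A linear map with `A Aᵀ = c₀ I` also satisfies `Aᵀ A = c₀ I`. -/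
lemma adjoint_apply_apply {d : ℕ} {A : EuclideanSpace ℝ (Fin d) →L[ℝ] EuclideanSpace ℝ (Fin d)}
    {c₀ : ℝ} (hc₀ : 0 < c₀) (hA : A ∘L (ContinuousLinearMap.adjoint A)
      = c₀ • ContinuousLinearMap.id ℝ (EuclideanSpace ℝ (Fin d))) (v : EuclideanSpace ℝ (Fin d)) :
    ContinuousLinearMap.adjoint A (A v) = c₀ • v := by
  have hA' : ∀ v, A (ContinuousLinearMap.adjoint A v) = c₀ • v := fun v => by
    simpa using congrArg (fun T => T v) hA
  have hsurj : Function.Surjective (A : EuclideanSpace ℝ (Fin d) →ₗ[ℝ] EuclideanSpace ℝ (Fin d)) :=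
    fun v => ⟨c₀⁻¹ • ContinuousLinearMap.adjoint A v, by
      rw [ContinuousLinearMap.coe_coe, map_smul, hA', inv_smul_smul₀ hc₀.ne']⟩
  refine LinearMap.injective_iff_surjective.2 hsurj ?_
  rw [ContinuousLinearMap.coe_coe, hA', map_smul]

lemma norm_apply_eq {d : ℕ} {A : EuclideanSpace ℝ (Fin d) →L[ℝ] EuclideanSpace ℝ (Fin d)}
    {c₀ : ℝ} (hc₀ : 0 < c₀) (hA : A ∘L (ContinuousLinearMap.adjoint A)
      = c₀ • ContinuousLinearMap.id ℝ (EuclideanSpace ℝ (Fin d))) (v : EuclideanSpace ℝ (Fin d)) :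
    ‖A v‖ = √c₀ * ‖v‖ := by
  have h1 : ‖A v‖ ^ 2 = c₀ * ‖v‖ ^ 2 := by
    rw [← real_inner_self_eq_norm_sq, ← ContinuousLinearMap.adjoint_inner_right,
      adjoint_apply_apply hc₀ hA, inner_smul_right, real_inner_self_eq_norm_sq]
  rw [← Real.sqrt_sq (norm_nonneg (A v)), h1, Real.sqrt_mul hc₀.le, Real.sqrt_sq (norm_nonneg v)]

section Coding

variable {d l : ℕ} {A : EuclideanSpace ℝ (Fin d) →L[ℝ] EuclideanSpace ℝ (Fin d)}
  {c : Fin l → EuclideanSpace ℝ (Fin d)} {K : Set (EuclideanSpace ℝ (Fin d))}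
  {π : Sig l → EuclideanSpace ℝ (Fin d)}

lemma coding_mem_itIm (hπ : ∀ x, (⋂ n, itIm (fun i x => A x + c i) K x n) = {π x}) (x : Sig l)
    (n : ℕ) : π x ∈ itIm (fun i x => A x + c i) K x n :=
  mem_iInter.1 ((hπ x).symm ▸ mem_singleton (π x)) n

/-- The point `A (π (σ x)) + c (x 0)` lies in all the sets whose intersection is `{π x}`. -/
lemma coding_eq (hKattr : K = ⋃ i, (fun x => A x + c i) '' K)
    (hπ : ∀ x, (⋂ n, itIm (fun i x => A x + c i) K x n) = {π x}) (x : Sig l) :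
    π x = A (π (shift x)) + c (x 0) := by
  have : A (π (shift x)) + c (x 0) ∈ ⋂ n, itIm (fun i x => A x + c i) K x n := by
    refine mem_iInter.2 fun n => ?_
    cases n with
    | zero =>
      change _ ∈ K
      rw [hKattr]
      exact mem_iUnion.2 ⟨x 0, _, coding_mem_itIm hπ (shift x) 0, rfl⟩
    | succ n => exact ⟨_, coding_mem_itIm hπ (shift x) n, rfl⟩
  rw [hπ] at this
  exact this.symm

/-- Every point of the attractor has an address. -/
lemma range_coding (hKattr : K = ⋃ i, (fun x => A x + c i) '' K)
    (hπ : ∀ x, (⋂ n, itIm (fun i x => A x + c i) K x n) = {π x}) : range π = K := by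
  refine Subset.antisymm (range_subset_iff.2 fun x => coding_mem_itIm hπ x 0) fun y hy => ?_
  have hstep : ∀ y : K, ∃ p : Fin l × K, A p.2 + c p.1 = y := by
    rintro ⟨y, hy⟩
    rw [hKattr] at hy
    obtain ⟨i, z, hz, hzy⟩ := mem_iUnion.1 hy
    exact ⟨(i, ⟨z, hz⟩), hzy⟩
  choose p hp using hstep
  -- Following the chosen preimages produces an address of every point.
  have key : ∀ n : ℕ, ∀ y : K, (y : EuclideanSpace ℝ (Fin d)) ∈ itIm (fun i x => A x + c i) K
      (fun k => (p ((fun z => (p z).2)^[k] y)).1) n := by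
    intro n
    induction n with
    | zero => exact fun y => y.2
    | succ n ih => exact fun y => ⟨_, ih (p y).2, hp y⟩
  have := mem_iInter.2 fun n => key n ⟨y, hy⟩
  rw [hπ] at this
  exact ⟨_, this.symm⟩

/-- The coding map is a pointwise limit of functions of finitely many letters. -/
lemma measurable_coding {ρ R : ℝ} (hρ0 : 0 ≤ ρ) (hρ1 : ρ < 1) (hA : ∀ v, ‖A v‖ = ρ * ‖v‖)
    (hπ : ∀ x, π x = A (π (shift x)) + c (x 0)) (hR : ∀ x, ‖π x‖ ≤ R) : Measurable π := by
  have hpow : ∀ (n : ℕ) (v), ‖(A ^ n) v‖ = ρ ^ n * ‖v‖ := by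
    intro n
    induction n with
    | zero => simp
    | succ n ih =>
      intro v
      rw [pow_succ, mul_apply_eq_comp, ih, hA]
      ring
  refine measurable_of_tendsto_metrizable (f := fun n x => wordTrans A c n (word n x)) (fun n => ?_) ?_
  · exact (measurable_of_countable (wordTrans A c n)).comp
      (measurable_pi_lambda (word n) fun i => measurable_pi_apply (i : ℕ))
  · refine tendsto_pi_nhds.2 fun x => tendsto_iff_norm_sub_tendsto_zero.2 ?_
    have h0 := (tendsto_pow_atTop_nhds_zero_of_lt_one hρ0 hρ1).mul_const R
    rw [zero_mul] at h0
    refine squeeze_zero (fun _ => norm_nonneg _) (fun n => ?_) h0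
    rw [eq_wordTrans hπ n x, sub_add_cancel_right, norm_neg, hpow]
    gcongr
    exact hR _

end Coding

/-- **Lemma 3.1** (Feng–Hu, Theorem 2.13). Let `S_i x = A x + c_i` be an IFS on `ℝ^d`
where `A` is a compressed orthogonal matrix, i.e. `A Aᵀ = c₀ I` with `0 < c₀ < 1`
(so `‖A‖ = √c₀ < 1`), `K` its attractor and `π` the canonical projection. Then
`dim_H K = sup { h_π(σ,m) : m ∈ M_σ(Σ) } / (−log ‖A‖)`. -/
theorem dimH_attractor_eq_sup_projEntropy_div {d l : ℕ} (hl : 0 < l)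
    (A : EuclideanSpace ℝ (Fin d) →L[ℝ] EuclideanSpace ℝ (Fin d))
    (c₀ : ℝ) (hc₀pos : 0 < c₀) (hc₀lt : c₀ < 1)
    (hAorth : A ∘L (ContinuousLinearMap.adjoint A)
      = c₀ • ContinuousLinearMap.id ℝ (EuclideanSpace ℝ (Fin d)))
    (c : Fin l → EuclideanSpace ℝ (Fin d))
    (K : Set (EuclideanSpace ℝ (Fin d))) (hKcomp : IsCompact K) (hKne : K.Nonempty)
    (hKattr : K = ⋃ i, (fun x => A x + c i) '' K)
    (π : Sig l → EuclideanSpace ℝ (Fin d))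
    (hπ : ∀ x, (⋂ n, itIm (fun i x => A x + c i) K x n) = {π x}) :
    dimH K = ENNReal.ofReal
      ((sSup {r : ℝ | ∃ μ : Measure (Sig l), IsProbabilityMeasure μ ∧
          Measure.map shift μ = μ ∧ r = projEntropy π μ}) / (-Real.log ‖A‖)) := by
  -- In dimension zero `‖A‖ = 0`, so the quotient has its junk value `0`, which is correct.
  rcases Nat.eq_zero_or_pos d with rfl | hd
  · have hA0 : ‖A‖ = 0 := by rw [Subsingleton.elim A 0, norm_zero]
    rw [dimH_subsingleton K.subsingleton_of_subsingleton, hA0, Real.log_zero, neg_zero, div_zero,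
      ENNReal.ofReal_zero]
  have : Nonempty (Fin d) := ⟨⟨0, hd⟩⟩
  set S := {r : ℝ | ∃ μ : Measure (Sig l), IsProbabilityMeasure μ ∧
    Measure.map shift μ = μ ∧ r = projEntropy π μ} with hS
  have hnorm := norm_apply_eq hc₀pos hAorth
  have hAn : ‖A‖ = √c₀ := ContinuousLinearMap.homothety_norm A hnorm
  have hρ0 : 0 < √c₀ := Real.sqrt_pos.2 hc₀pos
  have hρ1 : √c₀ < 1 := by
    rw [Real.sqrt_lt' one_pos, one_pow]
    exact hc₀lt
  obtain ⟨R, hR0, hR⟩ := hKcomp.isBounded.exists_pos_norm_le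
  have hrange := range_coding hKattr hπ
  have hbdd : ∀ x, ‖π x‖ ≤ R := fun x => hR _ (hrange ▸ mem_range_self x)
  have heq := coding_eq hKattr hπ
  have h : IsCoding A c π (√c₀) R :=
    { pos := hρ0
      lt_one := hρ1
      norm := hnorm
      inv := ⟨c₀⁻¹ • ContinuousLinearMap.adjoint A, fun v => ⟨by
        rw [smul_apply, adjoint_apply_apply hc₀pos hAorth,
          inv_smul_smul₀ hc₀pos.ne'], by
        have := congrArg (fun T => T v) hAorth
        simp only [ContinuousLinearMap.comp_apply, smul_apply,
          ContinuousLinearMap.id_apply] at this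
        rw [smul_apply, map_smul, this, inv_smul_smul₀ hc₀pos.ne']⟩⟩
      meas := measurable_coding hρ0.le hρ1 hnorm heq hbdd
      eq := heq
      bdd := hbdd
      compact := hrange ▸ hKcomp }
  have hL : 0 < -Real.log √c₀ := neg_pos.2 (Real.log_neg hρ0 hρ1)
  have hSb : BddAbove S := ⟨Real.log l, by
    rintro _ ⟨μ, hμ, -, rfl⟩
    exact h.projEntropy_le⟩
  have key : ∀ s : ℝ, 0 < s → (ENNReal.ofReal s ≤ dimH K ∧ s ≤ sSup S / -Real.log √c₀) ∨
      (dimH K ≤ ENNReal.ofReal s ∧ sSup S / -Real.log √c₀ ≤ s) := by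
    intro s hs
    rw [← hrange]
    rcases h.dichotomy hR0.le hs with ⟨h1, μ, hμ, hinv, h2⟩ | ⟨h1, h2⟩
    · exact Or.inl ⟨h1, (le_div_iff₀ hL).2 (h2.trans (le_csSup hSb ⟨μ, hμ, hinv.map_eq, rfl⟩))⟩
    · refine Or.inr ⟨h1, (div_le_iff₀ hL).2 (Real.sSup_le ?_ (by positivity))⟩
      rintro _ ⟨μ, hμ, hinv, rfl⟩
      exact h2 μ hμ ⟨measurable_shift, hinv⟩
  rw [hAn]
  refine le_antisymm (le_of_not_gt fun hlt => ?_) (le_of_not_gt fun hlt => ?_)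
  · obtain ⟨r, hr1, hr2⟩ := ENNReal.lt_iff_exists_nnreal_btwn.1 hlt
    have hr0 : (0 : ℝ) < r := by exact_mod_cast (zero_le.trans_lt hr1 : (0 : ENNReal) < r)
    rcases key r hr0 with ⟨-, h2⟩ | ⟨h1, -⟩
    · have := ENNReal.ofReal_le_ofReal h2
      rw [ENNReal.ofReal_coe_nnreal] at this
      exact absurd hr1 this.not_gt
    · rw [ENNReal.ofReal_coe_nnreal] at h1
      exact absurd hr2 h1.not_gt
  · obtain ⟨r, hr1, hr2⟩ := ENNReal.lt_iff_exists_nnreal_btwn.1 hlt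
    have hr0 : (0 : ℝ) < r := by exact_mod_cast (zero_le.trans_lt hr1 : (0 : ENNReal) < r)
    rcases key r hr0 with ⟨h1, -⟩ | ⟨-, h2⟩
    · rw [ENNReal.ofReal_coe_nnreal] at h1
      exact absurd hr1 h1.not_gt
    · have := ENNReal.ofReal_le_ofReal h2
      rw [ENNReal.ofReal_coe_nnreal] at this
      exact absurd hr2 this.not_gt

end
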